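/- arXiv:2010.01385 — 3 statements merged into one kernel-verified Lean document; each statement's English description precedes it below -/
import Mathlib

section
/- Let Y₁, Y₂, Z₁, Z₂ be pairwise disjoint finite sets of variables over a field F, let g ∈ F[Y₁ ∪ Z₁] and h ∈ F[Y₂ ∪ Z₂] be multilinear polynomials (so g and h are variable-disjoint), and set Y = Y₁ ∪ Y₂ and Z = Z₁ ∪ Z₂. Then the rank of the partial derivative matrix of the product gh with respect to (Y, Z) equals the product of the rank of the partial derivative matrix of g with respect to (Y₁, Z₁) and the rank of the partial derivative matrix of h with respect to (Y₂, Z₂), i.e. rank(M_{gh}) = rank(M_g) · rank(M_h). -/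
/-- The partial derivative matrix of a multilinear polynomial `f ∈ F[Y ∪ Z]`:
rows are indexed by subsets `S ⊆ Y`, columns by subsets `T ⊆ Z`, and the
`(S, T)` entry is the coefficient in `f` of the monomial `∏_{y ∈ S} y · ∏_{z ∈ T} z`. -/
noncomputable def pdMatrix (F : Type) [Field F] (n : ℕ) (Y Z : Finset (Fin n))
    (f : MvPolynomial (Fin n) F) : Matrix (Finset (Fin n)) (Finset (Fin n)) F :=
  fun S T =>
    if S ⊆ Y ∧ T ⊆ Z then
      MvPolynomial.coeff (∑ i ∈ S ∪ T, Finsupp.single i 1) f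
    else 0

open scoped Kronecker in
lemma aux_diag {F m : Type} [Field F] [Fintype m] [DecidableEq m] (M : Matrix m m F) :
    ∃ (V U : Matrix m m F) (w : m → F), IsUnit V.det ∧ IsUnit U.det ∧
      V * M * U = Matrix.diagonal w := by
  obtain ⟨V, U, e, hV, hU, h⟩ := Matrix.exists_rank_normal_form M
  rw [← Matrix.diagonal_one, ← Matrix.diagonal_zero, Matrix.fromBlocks_diagonal,
      Matrix.submatrix_diagonal_equiv] at h
  exact ⟨V, U, _, (Matrix.isUnit_iff_isUnit_det _).1 hV, (Matrix.isUnit_iff_isUnit_det _).1 hU, h⟩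

open scoped Kronecker in
lemma aux_rank_kron {F m : Type} [Field F] [Fintype m] [DecidableEq m] (A B : Matrix m m F) :
    (A ⊗ₖ B).rank = A.rank * B.rank := by
  classical
  obtain ⟨V, U, w, hV, hU, h⟩ := aux_diag A
  obtain ⟨V', U', w', hV', hU', h'⟩ := aux_diag B
  have key : (V ⊗ₖ V') * (A ⊗ₖ B) * (U ⊗ₖ U') = Matrix.diagonal (fun p : m × m => w p.1 * w' p.2) := by
    rw [← Matrix.mul_kronecker_mul, ← Matrix.mul_kronecker_mul, h, h',
      Matrix.diagonal_kronecker_diagonal]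
  have u1 : IsUnit (V ⊗ₖ V').det := by
    rw [Matrix.det_kronecker]; exact (hV.pow _).mul (hV'.pow _)
  have u2 : IsUnit (U ⊗ₖ U').det := by
    rw [Matrix.det_kronecker]; exact (hU.pow _).mul (hU'.pow _)
  rw [← Matrix.rank_mul_eq_right_of_isUnit_det _ (A ⊗ₖ B) u1,
    ← Matrix.rank_mul_eq_left_of_isUnit_det _ (_ * (A ⊗ₖ B)) u2, key,
    ← Matrix.rank_mul_eq_right_of_isUnit_det _ A hV,
    ← Matrix.rank_mul_eq_left_of_isUnit_det _ (_ * A) hU, h,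
    ← Matrix.rank_mul_eq_right_of_isUnit_det _ B hV',
    ← Matrix.rank_mul_eq_left_of_isUnit_det _ (_ * B) hU', h',
    Matrix.rank_diagonal, Matrix.rank_diagonal, Matrix.rank_diagonal, ← Fintype.card_prod]
  refine Fintype.card_congr ⟨fun p => (⟨p.1.1, left_ne_zero_of_mul p.2⟩, ⟨p.1.2, right_ne_zero_of_mul p.2⟩),
    fun q => ⟨(q.1.1, q.2.1), mul_ne_zero q.1.2 q.2.2⟩, fun _ => rfl, fun _ => rfl⟩

lemma aux_rank_le {F m k : Type} [Field F] [Fintype m] [Fintype k] [DecidableEq k]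
    (M : Matrix m m F) (N : Matrix k k F) (d d' : k → F) (e e' : k → m)
    (h : ∀ i j, N i j = d i * M (e i) (e' j) * d' j) : N.rank ≤ M.rank := by
  have : N = Matrix.diagonal d * M.submatrix e e' * Matrix.diagonal d' := by
    ext i j
    rw [Matrix.mul_diagonal, Matrix.diagonal_mul, h]; rfl
  rw [this]
  exact (Matrix.rank_mul_le_left _ _).trans
    ((Matrix.rank_mul_le_right _ _).trans (Matrix.rank_submatrix_le _ _ _))

lemma aux_ind {n : ℕ} (S : Finset (Fin n)) (j : Fin n) :
    (∑ i ∈ S, Finsupp.single i 1 : Fin n →₀ ℕ) j = if j ∈ S then 1 else 0 := by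
  rw [Finsupp.finsetSum_apply]
  simp [Finsupp.single_apply]

lemma aux_coeff {F : Type} [Field F] {n : ℕ} (g h : MvPolynomial (Fin n) F)
    (V W A B : Finset (Fin n)) (hVW : Disjoint V W) (hg : g.vars ⊆ V) (hh : h.vars ⊆ W)
    (hA : A ⊆ V) (hB : B ⊆ W) :
    MvPolynomial.coeff (∑ i ∈ A ∪ B, Finsupp.single i 1) (g * h) =
      MvPolynomial.coeff (∑ i ∈ A, Finsupp.single i 1) g *
      MvPolynomial.coeff (∑ i ∈ B, Finsupp.single i 1) h := by
  classical
  rw [MvPolynomial.coeff_mul]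
  refine Finset.sum_eq_single ((∑ i ∈ A, Finsupp.single i 1 : Fin n →₀ ℕ),
    (∑ i ∈ B, Finsupp.single i 1 : Fin n →₀ ℕ)) ?_ ?_
  · rintro ⟨a, b⟩ hab hne
    rw [Finset.HasAntidiagonal.mem_antidiagonal] at hab
    by_contra hc
    have ha := left_ne_zero_of_mul hc
    have hb := right_ne_zero_of_mul hc
    have ha' : ∀ i, i ∉ V → a i = 0 := fun i hi =>
      MvPolynomial.mem_support_notMem_vars_zero (MvPolynomial.mem_support_iff.2 ha)
        (fun hi' => hi (hg hi'))
    have hb' : ∀ i, i ∉ W → b i = 0 := fun i hi =>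
      MvPolynomial.mem_support_notMem_vars_zero (MvPolynomial.mem_support_iff.2 hb)
        (fun hi' => hi (hh hi'))
    have hs : ∀ i, a i + b i = if i ∈ A ∪ B then 1 else 0 := fun i => by
      rw [← aux_ind, ← hab]; rfl
    rw [Finset.disjoint_left] at hVW
    apply hne
    refine Prod.ext ?_ ?_ <;> ext i <;> simp only [aux_ind] <;>
      have := hs i <;> have := ha' i <;> have := hb' i <;> have := @hVW i <;>
      have := @hA i <;> have := @hB i <;> simp only [Finset.mem_union] at * <;> grind
  · intro hn
    exfalso
    apply hn
    rw [Finset.HasAntidiagonal.mem_antidiagonal, Finset.sum_union]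
    exact hVW.mono hA hB

lemma aux_entry (F : Type) [Field F] (n : ℕ)
    (Y₁ Y₂ Z₁ Z₂ : Finset (Fin n))
    (hY₁Y₂ : Disjoint Y₁ Y₂) (hY₁Z₂ : Disjoint Y₁ Z₂)
    (hY₂Z₁ : Disjoint Y₂ Z₁) (hZ₁Z₂ : Disjoint Z₁ Z₂)
    (g h : MvPolynomial (Fin n) F)
    (hgv : g.vars ⊆ Y₁ ∪ Z₁) (hhv : h.vars ⊆ Y₂ ∪ Z₂)
    (S₁ S₂ T₁ T₂ : Finset (Fin n)) (h1 : S₁ ⊆ Y₁) (h2 : S₂ ⊆ Y₂) (h3 : T₁ ⊆ Z₁) (h4 : T₂ ⊆ Z₂) :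
    pdMatrix F n (Y₁ ∪ Y₂) (Z₁ ∪ Z₂) (g * h) (S₁ ∪ S₂) (T₁ ∪ T₂) =
      pdMatrix F n Y₁ Z₁ g S₁ T₁ * pdMatrix F n Y₂ Z₂ h S₂ T₂ := by
  unfold pdMatrix
  rw [if_pos ⟨Finset.union_subset_union h1 h2, Finset.union_subset_union h3 h4⟩,
    if_pos ⟨h1, h3⟩, if_pos ⟨h2, h4⟩, Finset.union_union_union_comm]
  refine aux_coeff g h _ _ _ _ ?_ hgv hhv (Finset.union_subset_union h1 h3)
    (Finset.union_subset_union h2 h4)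
  simp only [Finset.disjoint_union_left, Finset.disjoint_union_right]
  exact ⟨⟨hY₁Y₂, hY₂Z₁.symm⟩, hY₁Z₂, hZ₁Z₂⟩

/-- multiplicativity of the rank of the partial derivative matrix for
variable-disjoint multilinear polynomials: if `g ∈ F[Y₁ ∪ Z₁]`, `h ∈ F[Y₂ ∪ Z₂]` with
`Y₁, Y₂, Z₁, Z₂` pairwise disjoint, then w.r.t. `Y = Y₁ ∪ Y₂`, `Z = Z₁ ∪ Z₂` we have
`rank(M_{gh}) = rank(M_g) · rank(M_h)`. -/
theorem rank_pdMatrix_mul (F : Type) [Field F] (n : ℕ)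
    (Y₁ Y₂ Z₁ Z₂ : Finset (Fin n))
    (hY₁Y₂ : Disjoint Y₁ Y₂) (hY₁Z₁ : Disjoint Y₁ Z₁) (hY₁Z₂ : Disjoint Y₁ Z₂)
    (hY₂Z₁ : Disjoint Y₂ Z₁) (hY₂Z₂ : Disjoint Y₂ Z₂) (hZ₁Z₂ : Disjoint Z₁ Z₂)
    (g h : MvPolynomial (Fin n) F)
    (hg1 : ∀ i, g.degreeOf i ≤ 1) (hh1 : ∀ i, h.degreeOf i ≤ 1)
    (hgv : g.vars ⊆ Y₁ ∪ Z₁) (hhv : h.vars ⊆ Y₂ ∪ Z₂) :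
    (pdMatrix F n (Y₁ ∪ Y₂) (Z₁ ∪ Z₂) (g * h)).rank =
      (pdMatrix F n Y₁ Z₁ g).rank * (pdMatrix F n Y₂ Z₂ h).rank := by
  classical
  rw [← aux_rank_kron]
  have E := aux_entry F n Y₁ Y₂ Z₁ Z₂ hY₁Y₂ hY₁Z₂ hY₂Z₁ hZ₁Z₂ g h hgv hhv
  apply le_antisymm
  · refine aux_rank_le _ _ (fun S => if S ⊆ Y₁ ∪ Y₂ then 1 else 0)
      (fun T => if T ⊆ Z₁ ∪ Z₂ then 1 else 0)
      (fun S => (S ∩ Y₁, S ∩ Y₂)) (fun T => (T ∩ Z₁, T ∩ Z₂)) ?_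
    intro S T
    by_cases hS : S ⊆ Y₁ ∪ Y₂
    · by_cases hT : T ⊆ Z₁ ∪ Z₂
      · have := E (S ∩ Y₁) (S ∩ Y₂) (T ∩ Z₁) (T ∩ Z₂) Finset.inter_subset_right
          Finset.inter_subset_right Finset.inter_subset_right Finset.inter_subset_right
        rw [← Finset.inter_union_distrib_left, ← Finset.inter_union_distrib_left,
          Finset.inter_eq_left.2 hS, Finset.inter_eq_left.2 hT] at this
        simp only [if_pos hS, if_pos hT, one_mul, mul_one, this, Matrix.kroneckerMap_apply]
      · simp [pdMatrix, hT]
    · simp [pdMatrix, hS]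
  · refine aux_rank_le _ _ (fun S => if S.1 ⊆ Y₁ ∧ S.2 ⊆ Y₂ then 1 else 0)
      (fun T => if T.1 ⊆ Z₁ ∧ T.2 ⊆ Z₂ then 1 else 0)
      (fun S => S.1 ∪ S.2) (fun T => T.1 ∪ T.2) ?_
    rintro ⟨S₁, S₂⟩ ⟨T₁, T₂⟩
    by_cases hS : S₁ ⊆ Y₁ ∧ S₂ ⊆ Y₂
    · by_cases hT : T₁ ⊆ Z₁ ∧ T₂ ⊆ Z₂
      · simp only [if_pos hS, if_pos hT, one_mul, mul_one, Matrix.kroneckerMap_apply,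
          E S₁ S₂ T₁ T₂ hS.1 hS.2 hT.1 hT.2]
      · simp only [if_neg hT, mul_zero, Matrix.kroneckerMap_apply, pdMatrix]
        split_ifs <;> first | (exfalso; tauto) | simp
    · simp only [if_neg hS, zero_mul, Matrix.kroneckerMap_apply, pdMatrix]
      split_ifs <;> first | (exfalso; tauto) | simp
end

section
/- There exist a constant k ∈ ℕ, a constant ε > 0, a field G (a field of rational functions in auxiliary variables over an arbitrary base field), and, for infinitely many n, a multilinear polynomial f_n ∈ G[x₁,...,x_n] computable by a read-k arithmetic formula over G, such that whenever f_n = f₁ + f₂ + ... + f_s where each f_i ∈ G[x₁,...,x_n] is computable by a read-once formula over G, then s ≥ 2^{εn}. -/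
/-- An arithmetic formula over `F` in variables `x_0, …, x_{n-1}`: a rooted binary tree
whose leaves are labeled by variables or constants and whose internal nodes are `+` or `×`. -/
inductive Formula (F : Type) (n : ℕ) where
  | const : F → Formula F n
  | var : Fin n → Formula F n
  | add : Formula F n → Formula F n → Formula F n
  | mul : Formula F n → Formula F n → Formula F n

namespace Formula

variable {F : Type} {n : ℕ}

/-- The polynomial computed by a formula. -/
noncomputable def eval [Field F] : Formula F n → MvPolynomial (Fin n) F
  | const c => MvPolynomial.C c
  | var i => MvPolynomial.X i
  | add f g => f.eval + g.eval
  | mul f g => f.eval * g.eval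

/-- Number of leaves of the formula labeled by the variable `x_i`. -/
def readCount : Formula F n → Fin n → ℕ
  | const _, _ => 0
  | var j, i => if j = i then 1 else 0
  | add f g, i => f.readCount i + g.readCount i
  | mul f g, i => f.readCount i + g.readCount i

/-- A read-`k` formula: every variable labels at most `k` leaves.  `ReadK 1` is the class
of read-once formulas (ROFs). -/
def ReadK (k : ℕ) (Φ : Formula F n) : Prop := ∀ i : Fin n, Φ.readCount i ≤ k

end Formula

namespace SumROF

open Finset

variable {ι : Type} [DecidableEq ι] {G : Type} [Field G]

/-- Merge two assignments along `Y`. -/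
def mrg (Y : Finset ι) (a b : ι → Bool) : ι → Bool := fun i => if i ∈ Y then a i else b i

/-- The function `F` on the cube has rank at most `r` with respect to `Y`. -/
def RK (Y : Finset ι) (r : ℕ) (F : (ι → Bool) → G) : Prop :=
  ∃ (κ : Type) (_ : Fintype κ) (u v : κ → (ι → Bool) → G),
    Fintype.card κ ≤ r ∧ ∀ a b, F (mrg Y a b) = ∑ k, u k a * v k b

lemma RK.add {Y : Finset ι} {r s : ℕ} {F H : (ι → Bool) → G} (hF : RK Y r F) (hH : RK Y s H) :
    RK Y (r + s) (fun x => F x + H x) := by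
  obtain ⟨κ, _, u, v, hc, h⟩ := hF
  obtain ⟨κ', _, u', v', hc', h'⟩ := hH
  refine ⟨κ ⊕ κ', inferInstance, Sum.elim u u', Sum.elim v v', ?_, ?_⟩
  · simp; omega
  · intro a b
    simp [h, h']

lemma RK.mul {Y : Finset ι} {r s : ℕ} {F H : (ι → Bool) → G} (hF : RK Y r F) (hH : RK Y s H) :
    RK Y (r * s) (fun x => F x * H x) := by
  obtain ⟨κ, _, u, v, hc, h⟩ := hF
  obtain ⟨κ', _, u', v', hc', h'⟩ := hH
  refine ⟨κ × κ', inferInstance, fun p a => u p.1 a * u' p.2 a, fun p a => v p.1 a * v' p.2 a, ?_, ?_⟩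
  · simp; gcongr
  · intro a b
    simp only [h, h', Finset.sum_mul_sum, Fintype.sum_prod_type]
    refine Finset.sum_congr rfl fun i _ => Finset.sum_congr rfl fun j _ => by ring

lemma RK.sum {Y : Finset ι} {s : ℕ} {r : Fin s → ℕ} {F : Fin s → (ι → Bool) → G}
    (hF : ∀ j, RK Y (r j) (F j)) :
    RK Y (∑ j, r j) (fun x => ∑ j, F j x) := by
  choose κ i u v hc h using hF
  refine ⟨Σ j, κ j, inferInstance, fun p => u p.1 p.2, fun p => v p.1 p.2, ?_, ?_⟩
  · simp only [Fintype.card_sigma]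
    exact Finset.sum_le_sum fun j _ => hc j
  · intro a b
    rw [Fintype.sum_sigma]
    exact Finset.sum_congr rfl fun j _ => h j a b

lemma RK.mono {Y : Finset ι} {r s : ℕ} {F : (ι → Bool) → G} (hF : RK Y r F) (h : r ≤ s) :
    RK Y s F := by
  obtain ⟨κ, i, u, v, hc, h'⟩ := hF
  exact ⟨κ, i, u, v, hc.trans h, h'⟩

lemma RK_left (Y S : Finset ι) {F : (ι → Bool) → G}
    (hF : ∀ x y, (∀ i ∈ S, x i = y i) → F x = F y) : RK Y (2 ^ #(Y ∩ S)) F := by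
  refine ⟨{A // A ∈ (Y ∩ S).powerset}, inferInstance,
    fun A a => if (Y ∩ S).filter (fun i => a i = true) = A.1 then 1 else 0,
    fun A b => F (mrg Y (fun i => decide (i ∈ A.1)) b), ?_, ?_⟩
  · rw [Fintype.card_coe, Finset.card_powerset]
  · intro a b
    rw [Finset.sum_eq_single
      (⟨(Y ∩ S).filter (fun i => a i = true), Finset.mem_powerset.2 (Finset.filter_subset _ _)⟩ :
        {A // A ∈ (Y ∩ S).powerset})]
    · simp only [if_true, one_mul]
      apply hF
      intro i hi
      unfold mrg
      split_ifs with h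
      · simp [h, hi]
      · rfl
    · intro A _ hA
      dsimp only
      rw [if_neg, zero_mul]
      intro h
      exact hA (Subtype.ext h.symm)
    · intro h
      exact absurd (Finset.mem_univ _) h

lemma RK_right (Y S : Finset ι) {F : (ι → Bool) → G}
    (hF : ∀ x y, (∀ i ∈ S, x i = y i) → F x = F y) : RK Y (2 ^ #(S \ Y)) F := by
  refine ⟨{A // A ∈ (S \ Y).powerset}, inferInstance,
    fun A a => F (mrg Y a (fun i => decide (i ∈ A.1))),
    fun A b => if (S \ Y).filter (fun i => b i = true) = A.1 then 1 else 0, ?_, ?_⟩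
  · rw [Fintype.card_coe, Finset.card_powerset]
  · intro a b
    rw [Finset.sum_eq_single
      (⟨(S \ Y).filter (fun i => b i = true), Finset.mem_powerset.2 (Finset.filter_subset _ _)⟩ :
        {A // A ∈ (S \ Y).powerset})]
    · simp only [if_true, mul_one]
      apply hF
      intro i hi
      unfold mrg
      split_ifs with h
      · rfl
      · simp [h, hi]
    · intro A _ hA
      dsimp only
      rw [if_neg, mul_zero]
      intro h
      exact hA (Subtype.ext h.symm)
    · intro h
      exact absurd (Finset.mem_univ _) h

/-- Read-once functions on the cube. -/
inductive ROP : Finset ι → ((ι → Bool) → G) → Prop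
  | const (S : Finset ι) (c : G) : ROP S (fun _ => c)
  | var (i : ι) : ROP {i} (fun x => if x i then 1 else 0)
  | add {S T : Finset ι} {F H : (ι → Bool) → G} : Disjoint S T → ROP S F → ROP T H →
      ROP (S ∪ T) (fun x => F x + H x)
  | mul {S T : Finset ι} {F H : (ι → Bool) → G} : Disjoint S T → ROP S F → ROP T H →
      ROP (S ∪ T) (fun x => F x * H x)

lemma ROP.dep {S : Finset ι} {F : (ι → Bool) → G} (h : ROP S F) :
    ∀ x y, (∀ i ∈ S, x i = y i) → F x = F y := by
  induction h with
  | const S c => intros; rfl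
  | var i => intro x y h; simp [h i (by simp)]
  | add _ _ _ h1 h2 =>
    intro x y h
    simp only
    rw [h1 x y fun i hi => h i (by simp [hi]), h2 x y fun i hi => h i (by simp [hi])]
  | mul _ _ _ h1 h2 =>
    intro x y h
    simp only
    rw [h1 x y fun i hi => h i (by simp [hi]), h2 x y fun i hi => h i (by simp [hi])]

lemma ROP.congr' {S T : Finset ι} {F H : (ι → Bool) → G} (h : ROP S F) (hS : S = T)
    (hF : ∀ x, F x = H x) : ROP T H := by
  subst hS
  rwa [← funext hF]

lemma hs_left {S T P : Finset ι} (hd : Disjoint S T) (hP : P ⊆ S) :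
    (S \ P) ∪ T = (S ∪ T) \ P := by
  rw [Finset.union_sdiff_distrib, Finset.sdiff_eq_self_of_disjoint (s := T)]
  exact (hd.mono_left hP).symm

lemma hs_right {S T P : Finset ι} (hd : Disjoint S T) (hP : P ⊆ T) :
    S ∪ (T \ P) = (S ∪ T) \ P := by
  rw [Finset.union_comm, hs_left hd.symm hP, Finset.union_comm]

lemma ROP.split {S : Finset ι} {F : (ι → Bool) → G} (h : ROP S F) (hS : 3 ≤ #S) :
    ∃ (P : Finset ι) (h0 h1 g : (ι → Bool) → G), P ⊆ S ∧ (#P = 3 ∨ #P = 4) ∧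
      ROP (S \ P) h0 ∧ ROP (S \ P) h1 ∧ ROP P g ∧ ∀ x, F x = h0 x + h1 x * g x := by
  induction h with
  | const S c =>
    obtain ⟨P, hP, hc⟩ := Finset.exists_subset_card_eq hS
    exact ⟨P, fun _ => c, fun _ => 0, fun _ => 0, hP, Or.inl hc, .const _ _, .const _ _,
      .const _ _, by simp⟩
  | var i => simp at hS
  | @add S T F H hd hF hH ih1 ih2 =>
    by_cases h1 : 3 ≤ #S
    · obtain ⟨P, h0, h1, g, hP, hc, r0, r1, rg, e⟩ := ih1 h1
      have hd' : Disjoint (S \ P) T := hd.mono_left Finset.sdiff_subset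
      have hs : (S \ P) ∪ T = (S ∪ T) \ P := hs_left hd hP
      exact ⟨P, _, _, g, hP.trans Finset.subset_union_left, hc,
        (ROP.add hd' r0 hH).congr' hs fun x => rfl,
        (ROP.add hd' r1 (.const T 0)).congr' hs fun x => rfl, rg, fun x => by simp only [e]; ring⟩
    · by_cases h2 : 3 ≤ #T
      · obtain ⟨P, h0, h1, g, hP, hc, r0, r1, rg, e⟩ := ih2 h2
        have hd' : Disjoint S (T \ P) := hd.mono_right Finset.sdiff_subset
        have hs : S ∪ (T \ P) = (S ∪ T) \ P := hs_right hd hP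
        exact ⟨P, _, _, g, hP.trans Finset.subset_union_right, hc,
          (ROP.add hd' hF r0).congr' hs fun x => rfl,
          (ROP.add hd' (.const S 0) r1).congr' hs fun x => rfl, rg,
          fun x => by simp only [e]; ring⟩
      · refine ⟨S ∪ T, fun _ => 0, fun _ => 1, _, subset_rfl, ?_, .const _ _, .const _ _,
          ROP.add hd hF hH, by simp⟩
        rw [Finset.card_union_of_disjoint hd] at *
        omega
  | @mul S T F H hd hF hH ih1 ih2 =>
    by_cases h1 : 3 ≤ #S
    · obtain ⟨P, h0, h1, g, hP, hc, r0, r1, rg, e⟩ := ih1 h1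
      have hd' : Disjoint (S \ P) T := hd.mono_left Finset.sdiff_subset
      have hs : (S \ P) ∪ T = (S ∪ T) \ P := hs_left hd hP
      exact ⟨P, _, _, g, hP.trans Finset.subset_union_left, hc,
        (ROP.mul hd' r0 hH).congr' hs fun x => rfl,
        (ROP.mul hd' r1 hH).congr' hs fun x => rfl, rg, fun x => by simp only [e]; ring⟩
    · by_cases h2 : 3 ≤ #T
      · obtain ⟨P, h0, h1, g, hP, hc, r0, r1, rg, e⟩ := ih2 h2
        have hd' : Disjoint S (T \ P) := hd.mono_right Finset.sdiff_subset
        have hs : S ∪ (T \ P) = (S ∪ T) \ P := hs_right hd hP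
        exact ⟨P, _, _, g, hP.trans Finset.subset_union_right, hc,
          (ROP.mul hd' hF r0).congr' hs fun x => rfl,
          (ROP.mul hd' hF r1).congr' hs fun x => rfl, rg,
          fun x => by simp only [e]; ring⟩
      · refine ⟨S ∪ T, fun _ => 0, fun _ => 1, _, subset_rfl, ?_, .const _ _, .const _ _,
          ROP.mul hd hF hH, by simp⟩
        rw [Finset.card_union_of_disjoint hd] at *
        omega

/-- trivial rank bound -/
def bd (P Y : Finset ι) : ℕ := 2 ^ min #Y (#P - #Y)

lemma RK_bd (Y P : Finset ι) {F : (ι → Bool) → G}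
    (hF : ∀ x y, (∀ i ∈ P, x i = y i) → F x = F y) : RK Y (bd P (Y ∩ P)) F := by
  unfold bd
  rcases le_total #(Y ∩ P) (#P - #(Y ∩ P)) with h | h
  · rw [min_eq_left h]; exact RK_left Y P hF
  · rw [min_eq_right h]
    have := RK_right Y P hF
    rwa [Finset.card_sdiff] at this

lemma sum_bd (P : Finset ι) : ∑ Y ∈ P.powerset, bd P Y =
    ∑ j ∈ Finset.range (#P + 1), (#P).choose j * 2 ^ min j (#P - j) := by
  have := Finset.sum_powerset_apply_card (fun j => 2 ^ min j (#P - j)) (x := P)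
  simpa [bd] using this

lemma sum_split {S P : Finset ι} (hP : P ⊆ S) (φ : Finset ι → Finset ι → ℝ) :
    ∑ Y ∈ S.powerset, φ (Y ∩ (S \ P)) (Y ∩ P) =
      ∑ Q ∈ (S \ P).powerset, ∑ T ∈ P.powerset, φ Q T := by
  rw [← Finset.sum_product']
  refine Finset.sum_nbij' (fun Y => (Y ∩ (S \ P), Y ∩ P)) (fun q => q.1 ∪ q.2) ?_ ?_ ?_ ?_ ?_
  · intro Y hY
    simp [Finset.inter_subset_right]
  · rintro ⟨Q, T⟩ h
    simp only [mem_product, mem_powerset] at h ⊢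
    exact Finset.union_subset (h.1.trans Finset.sdiff_subset) (h.2.trans hP)
  · intro Y hY
    simp only [mem_powerset] at hY
    ext i; have := @hY i; simp; tauto
  · rintro ⟨Q, T⟩ h
    simp only [mem_product, mem_powerset] at h
    simp only [Prod.mk.injEq]
    constructor
    · ext i; have h1 := @h.1 i; have h2 := @h.2 i; have := @hP i; simp only [mem_inter, mem_union, mem_sdiff] at *; tauto
    · ext i; have h1 := @h.1 i; have h2 := @h.2 i; have := @hP i; simp only [mem_inter, mem_union, mem_sdiff] at *; tauto
  · intro Y hY; rfl

lemma upper : ∀ (m : ℕ) (S : Finset ι) (F : (ι → Bool) → G), #S = m → ROP S F →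
    ∃ ρ : Finset ι → ℕ, (∀ Y, RK Y (ρ (Y ∩ S)) F) ∧
      ∑ Y ∈ S.powerset, (ρ Y : ℝ) ≤ (2.804 : ℝ) ^ m := by
  intro m
  induction m using Nat.strong_induction_on with
  | _ m ih =>
  intro S F hm hF
  by_cases h3 : 3 ≤ #S
  · obtain ⟨P, h0, h1, g, hP, hc, r0, r1, rg, e⟩ := hF.split h3
    have hlt : #(S \ P) < m := by
      rw [Finset.card_sdiff_of_subset hP]; omega
    obtain ⟨ρ0, hρ0, s0⟩ := ih _ hlt (S \ P) h0 rfl r0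
    obtain ⟨ρ1, hρ1, s1⟩ := ih _ hlt (S \ P) h1 rfl r1
    refine ⟨fun Y => ρ0 (Y ∩ (S \ P)) + ρ1 (Y ∩ (S \ P)) * bd P (Y ∩ P), ?_, ?_⟩
    · intro Y
      have e1 : Y ∩ S ∩ (S \ P) = Y ∩ (S \ P) := by
        ext i; simp only [mem_inter, mem_sdiff]; tauto
      have e2 : Y ∩ S ∩ P = Y ∩ P := by ext i; have := @hP i; simp; tauto
      simp only [e1, e2]
      rw [funext e]
      exact (hρ0 Y).add ((hρ1 Y).mul (RK_bd Y P rg.dep))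
    · have := sum_split hP (fun Q T => (ρ0 Q : ℝ) + ρ1 Q * bd P T)
      push_cast
      rw [this]
      have e3 : ∀ Q, ∑ T ∈ P.powerset, ((ρ0 Q : ℝ) + ρ1 Q * bd P T) =
          2 ^ #P * ρ0 Q + ((∑ T ∈ P.powerset, bd P T : ℕ) : ℝ) * ρ1 Q := by
        intro Q
        rw [Finset.sum_add_distrib, ← Finset.mul_sum]
        simp
        ring
      simp only [e3]
      rw [Finset.sum_add_distrib, ← Finset.mul_sum, ← Finset.mul_sum, sum_bd]
      have hm' : m = #(S \ P) + #P := by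
        rw [Finset.card_sdiff_of_subset hP]; have := Finset.card_le_card hP; omega
      have hpos : (0:ℝ) ≤ 2.804 ^ #(S \ P) := by positivity
      rw [hm', pow_add]
      generalize (2.804:ℝ) ^ #(S \ P) = L at *
      rcases hc with hc | hc <;> rw [hc] <;>
        norm_num [Finset.sum_range_succ, Nat.choose] at * <;> nlinarith
  · refine ⟨fun Y => bd S Y, fun Y => RK_bd Y S hF.dep, ?_⟩
    rw [← Nat.cast_sum, sum_bd, ← hm]
    have : #S < 3 := by omega
    interval_cases #S <;> norm_num [Finset.sum_range_succ, Nat.choose]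

/-! ### Formulas to read-once functions -/

/-- The 0/1 point of the cube. -/
def pt {n : ℕ} (x : Fin n → Bool) : Fin n → G := fun i => if x i then 1 else 0

lemma formula_ROP {n : ℕ} (Φ : Formula G n) (h : Formula.ReadK 1 Φ) :
    ROP (Finset.univ.filter fun i => Φ.readCount i ≠ 0)
      (fun x => MvPolynomial.eval (pt x) Φ.eval) := by
  induction Φ with
  | const c => exact (ROP.const _ c).congr' rfl fun x => by simp [Formula.eval]
  | var i =>
    refine (ROP.var i).congr' ?_ fun x => by simp [Formula.eval, pt]
    ext j; simp [Formula.readCount, eq_comm]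
  | add f g hf hg =>
    have h1 : Formula.ReadK 1 f := fun i => by
      have := h i; simp only [Formula.readCount] at this; omega
    have h2 : Formula.ReadK 1 g := fun i => by
      have := h i; simp only [Formula.readCount] at this; omega
    refine (ROP.add ?_ (hf h1) (hg h2)).congr' ?_ fun x => by simp [Formula.eval]
    · rw [Finset.disjoint_left]
      intro i hi hj
      have := h i
      simp only [Formula.readCount, mem_filter] at *
      omega
    · ext i; simp only [Formula.readCount, mem_filter, mem_union, mem_univ, true_and]; grind
  | mul f g hf hg =>
    have h1 : Formula.ReadK 1 f := fun i => by
      have := h i; simp only [Formula.readCount] at this; omega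
    have h2 : Formula.ReadK 1 g := fun i => by
      have := h i; simp only [Formula.readCount] at this; omega
    refine (ROP.mul ?_ (hf h1) (hg h2)).congr' ?_ fun x => by simp [Formula.eval]
    · rw [Finset.disjoint_left]
      intro i hi hj
      have := h i
      simp only [Formula.readCount, mem_filter] at *
      omega
    · ext i; simp only [Formula.readCount, mem_filter, mem_union, mem_univ, true_and]; grind

lemma formula_upper {n : ℕ} (Φ : Formula G n) (h : Formula.ReadK 1 Φ) :
    ∃ ρ : Finset (Fin n) → ℕ,
      (∀ Y, RK Y (ρ Y) (fun x => MvPolynomial.eval (pt x) Φ.eval)) ∧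
      ∑ Y, (ρ Y : ℝ) ≤ (2.804 : ℝ) ^ n := by
  have h1 := formula_ROP Φ h
  have h2 : ROP Finset.univ (fun x => MvPolynomial.eval (pt x) Φ.eval) :=
    (ROP.add (disjoint_compl_right (a := Finset.univ.filter fun i => Φ.readCount i ≠ 0)) h1
      (.const _ 0)).congr' (Finset.union_compl _) fun x => by simp
  obtain ⟨ρ, hρ, hs⟩ := upper n Finset.univ _ (by simp) h2
  refine ⟨ρ, fun Y => by simpa using hρ Y, by simpa using hs⟩

/-! ### The generic block -/

lemma exists_emb (R : Type) [CommRing R] [IsDomain R] :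
    ∃ (K : Type) (_ : Field K) (j : R →+* K), Function.Injective j :=
  ⟨FractionRing R, inferInstance, algebraMap R (FractionRing R), IsFractionRing.injective R _⟩

lemma exists_gen (h : ℕ) : ∃ (G : Type) (_ : Field G) (v : (Fin (2 * h) → Bool) → G),
    ∀ Y : Finset (Fin (2 * h)), #Y = h → ∃ A B : (Fin h → Bool) → (Fin (2 * h) → Bool),
      (Matrix.of fun p q => v (mrg Y (A p) (B q))).det ≠ 0 := by
  obtain ⟨K, _, J, hJ⟩ := exists_emb (MvPolynomial (Fin (2 * h) → Bool) ℚ)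
  refine ⟨K, inferInstance, fun x => J (MvPolynomial.X x), ?_⟩
  intro Y hY
  have hY' : #(Yᶜ) = h := by rw [Finset.card_compl, hY, Fintype.card_fin]; omega
  let e := Finset.equivFinOfCardEq hY
  let e' := Finset.equivFinOfCardEq hY'
  let A : (Fin h → Bool) → (Fin (2 * h) → Bool) :=
    fun p i => if hi : i ∈ Y then p (e ⟨i, hi⟩) else false
  let B : (Fin h → Bool) → (Fin (2 * h) → Bool) :=
    fun p i => if hi : i ∈ Yᶜ then p (e' ⟨i, hi⟩) else false
  refine ⟨A, B, ?_⟩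
  let M0 : Matrix (Fin h → Bool) (Fin h → Bool) (MvPolynomial (Fin (2 * h) → Bool) ℚ) :=
    Matrix.of fun p q => MvPolynomial.X (mrg Y (A p) (B q))
  have hM : (Matrix.of fun p q => J (MvPolynomial.X (mrg Y (A p) (B q)))) = J.mapMatrix M0 := by
    ext p q; rfl
  rw [hM, ← RingHom.map_det]
  intro h0
  have h1 : M0.det = 0 := by
    apply hJ
    rw [h0, map_zero]
  let φ : (Fin (2 * h) → Bool) → ℚ :=
    fun x => if (fun j => x (e.symm j)) = (fun j => x (e'.symm j)) then 1 else 0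
  have h2 : (MvPolynomial.eval φ).mapMatrix M0 = 1 := by
    ext p q
    have a1 : (fun j => mrg Y (A p) (B q) (e.symm j)) = p := by
      funext j
      have : ((e.symm j : Y) : Fin (2 * h)) ∈ Y := (e.symm j).2
      simp [mrg, A, this]
    have a2 : (fun j => mrg Y (A p) (B q) (e'.symm j)) = q := by
      funext j
      have h3 : ((e'.symm j : (Yᶜ : Finset _)) : Fin (2 * h)) ∈ Yᶜ := (e'.symm j).2
      have h4 := Finset.mem_compl.1 h3
      simp only [mrg, B, h4, h3, if_false, dif_pos]
      simp
    simp only [RingHom.mapMatrix_apply, Matrix.map_apply, M0, Matrix.of_apply, MvPolynomial.eval_X,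
      φ, a1, a2, Matrix.one_apply]
  have h5 := congrArg Matrix.det h2
  rw [← RingHom.map_det, h1, map_zero, Matrix.det_one] at h5
  exact zero_ne_one h5

/-- Block partition. -/
def YW {N m : ℕ} (E : Fin N × Fin m ≃ ι) [Fintype ι] (W : Fin N → Finset (Fin m)) : Finset ι :=
  Finset.univ.filter fun x => (E.symm x).2 ∈ W (E.symm x).1

lemma lower {N m h : ℕ} [Fintype ι] (E : Fin N × Fin m ≃ ι) (v : (Fin m → Bool) → G)
    (W : Fin N → Finset (Fin m))
    (hv : ∀ b, ∃ A B : (Fin h → Bool) → (Fin m → Bool),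
      (Matrix.of fun p q => v (mrg (W b) (A p) (B q))).det ≠ 0)
    (r : ℕ) (hr : RK (YW E W) r (fun x => ∏ b, v (fun i => x (E (b, i))))) :
    (2 ^ h) ^ N ≤ r := by
  choose A B hd using hv
  obtain ⟨κ, _, u, w, hc, hF⟩ := hr
  let a : (Fin N → Fin h → Bool) → ι → Bool := fun P x => A (E.symm x).1 (P (E.symm x).1) (E.symm x).2
  let c : (Fin N → Fin h → Bool) → ι → Bool := fun P x => B (E.symm x).1 (P (E.symm x).1) (E.symm x).2
  let M : Fin N → Matrix (Fin h → Bool) (Fin h → Bool) G :=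
    fun b => Matrix.of fun p q => v (mrg (W b) (A b p) (B b q))
  have hM : ∀ P Q, ∑ k, u k (a P) * w k (c Q) = ∏ b, M b (P b) (Q b) := by
    intro P Q
    rw [← hF]
    refine Finset.prod_congr rfl fun b _ => ?_
    simp only [M, Matrix.of_apply]
    congr 1
    funext i
    simp [mrg, YW, a, c]
  let L : Matrix (Fin N → Fin h → Bool) (Fin N → Fin h → Bool) G :=
    Matrix.of fun P Q => ∏ b, (M b)⁻¹ (P b) (Q b)
  let U : Matrix (Fin N → Fin h → Bool) κ G := Matrix.of fun P k => u k (a P)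
  let V : Matrix κ (Fin N → Fin h → Bool) G := Matrix.of fun k Q => w k (c Q)
  have hLU : (L * U) * V = 1 := by
    rw [Matrix.mul_assoc]
    ext P R
    rw [Matrix.mul_apply]
    have : ∀ Q, L P Q * (U * V) Q R = ∏ b, ((M b)⁻¹ (P b) (Q b) * M b (Q b) (R b)) := by
      intro Q
      rw [Finset.prod_mul_distrib, ← hM Q R, Matrix.mul_apply]
      rfl
    simp only [this]
    have h1 := Finset.prod_univ_sum (fun _ : Fin N => (Finset.univ : Finset (Fin h → Bool)))
      (fun b q => (M b)⁻¹ (P b) q * M b q (R b))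
    rw [Fintype.piFinset_univ] at h1
    rw [← h1]
    have h2 : ∀ b, ∑ q, (M b)⁻¹ (P b) q * M b q (R b) = if P b = R b then 1 else 0 := by
      intro b
      rw [← Matrix.mul_apply, Matrix.nonsing_inv_mul _ (isUnit_iff_ne_zero.2 (hd b)),
        Matrix.one_apply]
    simp only [h2, Matrix.one_apply]
    rw [Finset.prod_ite_zero]
    simp [funext_iff]
  have h3 : (L * U * V).rank ≤ Fintype.card κ :=
    (Matrix.rank_mul_le_right _ _).trans (Matrix.rank_le_card_height _)
  rw [hLU, Matrix.rank_one] at h3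
  simp at h3
  exact h3.trans hc

/-! ### The hard polynomial -/

/-- computability with read bounds -/
def Comp {n : ℕ} (p : MvPolynomial (Fin n) G) (r : Fin n → ℕ) : Prop :=
  ∃ Φ : Formula G n, Φ.eval = p ∧ ∀ i, Φ.readCount i ≤ r i

lemma Comp.C {n : ℕ} (c : G) : Comp (n := n) (MvPolynomial.C c) 0 :=
  ⟨.const c, rfl, fun i => le_rfl⟩

lemma Comp.add {n : ℕ} {p q : MvPolynomial (Fin n) G} {r s : Fin n → ℕ} (hp : Comp p r)
    (hq : Comp q s) : Comp (p + q) (r + s) := by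
  obtain ⟨Φ, h1, h2⟩ := hp
  obtain ⟨Ψ, h3, h4⟩ := hq
  exact ⟨.add Φ Ψ, by rw [Formula.eval, h1, h3], fun i => Nat.add_le_add (h2 i) (h4 i)⟩

lemma Comp.mul {n : ℕ} {p q : MvPolynomial (Fin n) G} {r s : Fin n → ℕ} (hp : Comp p r)
    (hq : Comp q s) : Comp (p * q) (r + s) := by
  obtain ⟨Φ, h1, h2⟩ := hp
  obtain ⟨Ψ, h3, h4⟩ := hq
  exact ⟨.mul Φ Ψ, by rw [Formula.eval, h1, h3], fun i => Nat.add_le_add (h2 i) (h4 i)⟩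

lemma Comp.sum {n : ℕ} {α : Type} (s : Finset α) {p : α → MvPolynomial (Fin n) G}
    {r : α → Fin n → ℕ} (h : ∀ a, Comp (p a) (r a)) : Comp (∑ a ∈ s, p a) (∑ a ∈ s, r a) := by
  classical
  induction s using Finset.induction_on with
  | empty => simpa using Comp.C (n := n) (0 : G)
  | insert a s ha ih => rw [Finset.sum_insert ha, Finset.sum_insert ha]; exact (h a).add ih

lemma Comp.prod {n : ℕ} {α : Type} (s : Finset α) {p : α → MvPolynomial (Fin n) G}
    {r : α → Fin n → ℕ} (h : ∀ a, Comp (p a) (r a)) : Comp (∏ a ∈ s, p a) (∑ a ∈ s, r a) := by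
  classical
  induction s using Finset.induction_on with
  | empty => simpa using Comp.C (n := n) (1 : G)
  | insert a s ha ih => rw [Finset.prod_insert ha, Finset.sum_insert ha]; exact (h a).mul ih

/-- a literal -/
noncomputable def lit {n : ℕ} (j : Fin n) (t : Bool) : MvPolynomial (Fin n) G :=
  if t then MvPolynomial.X j else MvPolynomial.C 1 + MvPolynomial.C (-1) * MvPolynomial.X j

lemma Comp.lit {n : ℕ} (j : Fin n) (t : Bool) :
    Comp (SumROF.lit (G := G) j t) (Pi.single j 1) := by
  have hX : Comp (MvPolynomial.X j : MvPolynomial (Fin n) G) (Pi.single j 1) :=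
    ⟨.var j, rfl, fun i => by
      simp only [Formula.readCount, Pi.single_apply, eq_comm]; exact le_rfl⟩
  unfold SumROF.lit
  split_ifs
  · exact hX
  · simpa using (Comp.C (1 : G)).add ((Comp.C (-1 : G)).mul hX)

lemma lit_degree {n : ℕ} (j : Fin n) (t : Bool) (i : Fin n) :
    (lit (G := G) j t).degreeOf i ≤ if i = j then 1 else 0 := by
  have hX : (MvPolynomial.X j : MvPolynomial (Fin n) G).degreeOf i ≤ if i = j then 1 else 0 := by
    rw [MvPolynomial.degreeOf_X]
  cases t
  · refine (MvPolynomial.degreeOf_add_le _ _ _).trans ?_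
    rw [MvPolynomial.degreeOf_C]
    refine (max_le (Nat.zero_le _) ((MvPolynomial.degreeOf_mul_le _ _ _).trans ?_))
    rw [MvPolynomial.degreeOf_C, zero_add]
    exact hX
  · exact hX

lemma lit_eval {n : ℕ} (j : Fin n) (t : Bool) (x : Fin n → Bool) :
    MvPolynomial.eval (pt x) (lit (G := G) j t) = if x j = t then 1 else 0 := by
  unfold lit pt
  cases t <;> cases h : x j <;> simp [h]

/-- The hard polynomial. -/
noncomputable def hard {N m n : ℕ} (E : Fin N × Fin m ≃ Fin n) (v : (Fin m → Bool) → G) :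
    MvPolynomial (Fin n) G :=
  ∏ b, ∑ y : Fin m → Bool, MvPolynomial.C (v y) * ∏ i, lit (E (b, i)) (y i)

lemma hard_eval {N m n : ℕ} (E : Fin N × Fin m ≃ Fin n) (v : (Fin m → Bool) → G)
    (x : Fin n → Bool) :
    MvPolynomial.eval (pt x) (hard E v) = ∏ b, v (fun i => x (E (b, i))) := by
  unfold hard
  rw [map_prod]
  refine Finset.prod_congr rfl fun b _ => ?_
  rw [map_sum, Finset.sum_eq_single (fun i => x (E (b, i)))]
  · simp [lit_eval]
  · intro y _ hy
    rw [map_mul, map_prod]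
    have : ∃ i, x (E (b, i)) ≠ y i := by
      by_contra hh
      push Not at hh
      exact hy (funext fun i => (hh i).symm)
    obtain ⟨i, hi⟩ := this
    rw [Finset.prod_eq_zero (Finset.mem_univ i), mul_zero]
    rw [lit_eval, if_neg hi]
  · intro h; exact absurd (Finset.mem_univ _) h

lemma sum_E {N m n : ℕ} (E : Fin N × Fin m ≃ Fin n) (j : Fin n) :
    ∑ b, ∑ i, (if j = E (b, i) then 1 else 0) = 1 := by
  rw [← Fintype.sum_prod_type (f := fun q : Fin N × Fin m => if j = E q then 1 else 0),
    Finset.sum_eq_single (E.symm j)]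
  · simp
  · intro q _ hq
    rw [if_neg]
    rintro rfl
    simp at hq
  · simp

lemma hard_degree {N m n : ℕ} (E : Fin N × Fin m ≃ Fin n) (v : (Fin m → Bool) → G) (j : Fin n) :
    (hard E v).degreeOf j ≤ 1 := by
  unfold hard
  refine (MvPolynomial.degreeOf_prod_le _ _ _).trans ?_
  rw [← sum_E E j]
  refine Finset.sum_le_sum fun b _ => ?_
  refine (MvPolynomial.degreeOf_sum_le _ _ _).trans ?_
  refine Finset.sup_le fun y _ => ?_
  refine (MvPolynomial.degreeOf_mul_le _ _ _).trans ?_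
  rw [MvPolynomial.degreeOf_C, zero_add]
  refine (MvPolynomial.degreeOf_prod_le _ _ _).trans ?_
  exact Finset.sum_le_sum fun i _ => lit_degree _ _ _

lemma hard_comp {N m n : ℕ} (E : Fin N × Fin m ≃ Fin n) (v : (Fin m → Bool) → G) :
    ∃ Φ : Formula G n, Formula.ReadK (2 ^ m) Φ ∧ Φ.eval = hard E v := by
  have h : Comp (hard E v) (∑ b, ∑ y : Fin m → Bool, (0 + ∑ i, Pi.single (E (b, i)) 1)) :=
    Comp.prod _ fun b => Comp.sum _ fun y => (Comp.C _).mul (Comp.prod _ fun i => Comp.lit _ _)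
  obtain ⟨Φ, h1, h2⟩ := h
  refine ⟨Φ, fun j => (h2 j).trans ?_, h1⟩
  simp only [zero_add, Finset.sum_const, Finset.sum_apply, Pi.smul_apply, Pi.single_apply,
    ← Finset.smul_sum, sum_E]
  simp

lemma YW_inj {N m : ℕ} (E : Fin N × Fin m ≃ ι) [Fintype ι] : Function.Injective (YW E) := by
  intro W W' h
  funext b
  ext i
  have := Finset.ext_iff.1 h (E (b, i))
  simpa [YW] using this

lemma final {N h : ℕ} (v : (Fin (2 * h) → Bool) → G)
    (hv : ∀ Y : Finset (Fin (2 * h)), #Y = h → ∃ A B : (Fin h → Bool) → (Fin (2 * h) → Bool),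
      (Matrix.of fun p q => v (mrg Y (A p) (B q))).det ≠ 0)
    (hn : 2 * (2.804 : ℝ) ^ (2 * h) ≤ (2 * h).choose h * 2 ^ h)
    (s : ℕ) (fs : Fin s → MvPolynomial (Fin (N * (2 * h))) G)
    (hfs : ∀ j, ∃ Φ : Formula G _, Formula.ReadK 1 Φ ∧ Φ.eval = fs j)
    (hsum : hard finProdFinEquiv v = ∑ j, fs j) : (2 : ℝ) ^ N ≤ s := by
  let E : Fin N × Fin (2 * h) ≃ Fin (N * (2 * h)) := finProdFinEquiv
  have hup : ∀ j, ∃ ρ : Finset (Fin (N * (2 * h))) → ℕ,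
      (∀ Y, RK Y (ρ Y) (fun x => MvPolynomial.eval (pt x) (fs j))) ∧
      ∑ Y, (ρ Y : ℝ) ≤ (2.804 : ℝ) ^ (N * (2 * h)) := by
    intro j
    obtain ⟨Φ, h1, h2⟩ := hfs j
    rw [← h2]
    exact formula_upper Φ h1
  choose ρ hρ hs using hup
  have hlow : ∀ W ∈ Fintype.piFinset
      (fun _ : Fin N => Finset.powersetCard h (Finset.univ : Finset (Fin (2 * h)))),
      (2 ^ h) ^ N ≤ ∑ j, ρ j (YW E W) := by
    intro W hW
    apply lower E v W
    · intro b
      apply hv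
      have := Fintype.mem_piFinset.1 hW b
      exact (Finset.mem_powersetCard.1 this).2
    · have := RK.sum (fun j => hρ j (YW E W))
      convert this using 2 with x
      rw [← map_sum, ← hsum, hard_eval]
  have h1 := Finset.sum_le_sum hlow
  rw [Finset.sum_const, Fintype.card_piFinset] at h1
  simp only [Finset.card_powersetCard, Finset.prod_const, Finset.card_univ, Fintype.card_fin,
    smul_eq_mul] at h1
  have h2 : ∑ W ∈ Fintype.piFinset
      (fun _ : Fin N => Finset.powersetCard h (Finset.univ : Finset (Fin (2 * h)))),
      ∑ j, ρ j (YW E W) ≤ ∑ Y, ∑ j, ρ j Y := by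
    rw [← Finset.sum_image (f := fun Y => ∑ j, ρ j Y) (g := YW E)
      (fun _ _ _ _ hh => YW_inj E hh)]
    exact Finset.sum_le_sum_of_subset (Finset.subset_univ _)
  have h3 : (((2 * h).choose h : ℝ) ^ N * (2 ^ h) ^ N) ≤ ∑ Y, ∑ j, (ρ j Y : ℝ) := by
    exact_mod_cast h1.trans h2
  rw [Finset.sum_comm] at h3
  have h4 : ∑ j, ∑ Y, (ρ j Y : ℝ) ≤ s * (2.804 : ℝ) ^ (N * (2 * h)) := by
    refine (Finset.sum_le_sum fun j _ => hs j).trans ?_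
    simp
  have h5 := h3.trans h4
  rw [← mul_pow, mul_comm N, pow_mul] at h5
  have h6 : (2 * (2.804 : ℝ) ^ (2 * h)) ^ N ≤ ((2 * h).choose h * 2 ^ h : ℝ) ^ N := by
    gcongr
  have h7 := h6.trans h5
  rw [mul_pow] at h7
  exact le_of_mul_le_mul_right h7 (by positivity)

lemma numeric : 2 * (2.804 : ℝ) ^ (2 * 500) ≤ (2 * 500 : ℕ).choose 500 * 2 ^ 500 := by
  have h1 := Nat.four_pow_le_two_mul_self_mul_centralBinom 500 (by norm_num)
  rw [Nat.centralBinom] at h1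
  have h2 : (4 : ℝ) ^ 500 ≤ 2 * 500 * ((2 * 500 : ℕ).choose 500 : ℝ) := by exact_mod_cast h1
  generalize ((2 * 500 : ℕ).choose 500 : ℝ) = c at *
  have h3 : (2000 : ℝ) ≤ 1.0174 ^ 500 := by
    have a : (5 : ℝ) ≤ 1.0174 ^ 100 := by norm_num
    calc (2000 : ℝ) ≤ 5 ^ 5 := by norm_num
      _ ≤ (1.0174 ^ 100) ^ 5 := by gcongr
      _ = _ := by rw [← pow_mul]
  have h4 : (1.0174 : ℝ) ^ 500 * (2.804 ^ 2) ^ 500 ≤ 2 ^ 500 * 4 ^ 500 := by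
    rw [← mul_pow, ← mul_pow]
    apply pow_le_pow_left₀ <;> norm_num
  rw [pow_mul]
  have h5 : (0 : ℝ) < (2.804 ^ 2) ^ 500 := by positivity
  have h6 : (0 : ℝ) < 2 ^ 500 := by positivity
  generalize ((2.804 : ℝ) ^ 2) ^ 500 = L at *
  generalize (2 : ℝ) ^ 500 = d at *
  generalize (4 : ℝ) ^ 500 = f at *
  generalize (1.0174 : ℝ) ^ 500 = q at *
  have h7 : 2000 * L ≤ q * L := by gcongr
  have h8 : d * f ≤ d * (2 * 500 * c) := by gcongr
  nlinarith

end SumROF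

theorem sum_of_ROFs_lower_bound :
    ∃ (k : ℕ) (ε : ℝ), 0 < ε ∧ ∃ (G : Type) (_ : Field G),
      {n : ℕ |
        ∃ f : MvPolynomial (Fin n) G,
          (∀ i, f.degreeOf i ≤ 1) ∧
          (∃ Φ : Formula G n, Formula.ReadK k Φ ∧ Φ.eval = f) ∧
          ∀ (s : ℕ) (fs : Fin s → MvPolynomial (Fin n) G),
            (∀ j, ∃ Φ : Formula G n, Formula.ReadK 1 Φ ∧ Φ.eval = fs j) →
            f = ∑ j, fs j →
            (2 : ℝ) ^ (ε * n) ≤ (s : ℝ)}.Infinite := by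
  have hnum := SumROF.numeric
  obtain ⟨h, hh, hn⟩ : ∃ h : ℕ, 0 < h ∧
      2 * (2.804 : ℝ) ^ (2 * h) ≤ (2 * h).choose h * 2 ^ h := ⟨500, by norm_num, hnum⟩
  clear hnum
  obtain ⟨G, _, v, hv⟩ := SumROF.exists_gen h
  refine ⟨2 ^ (2 * h), 1 / (2 * h : ℕ), by positivity, G, inferInstance, ?_⟩
  apply Set.infinite_of_injective_forall_mem (f := fun N : ℕ => N * (2 * h))
  · intro a b hab
    exact Nat.eq_of_mul_eq_mul_right (by omega) hab
  · intro N
    refine ⟨SumROF.hard finProdFinEquiv v, SumROF.hard_degree _ _, SumROF.hard_comp _ _, ?_⟩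
    intro s fs hfs hsum
    have := SumROF.final v hv hn s fs hfs hsum
    have e : (1 / (2 * h : ℕ) : ℝ) * ((N * (2 * h) : ℕ) : ℝ) = N := by
      have : (h : ℝ) ≠ 0 := by positivity
      push_cast
      field_simp
    rw [e, Real.rpow_natCast]
    exact this
end

section
/- There exist a constant c > 0, a polynomial bound p, and, for infinitely many n, a multilinear polynomial ĥ_n in n variables x₀,...,x_{n−1} over a suitable field extension G computable by a syntactically multilinear algebraic branching program of size at most p(n), with the following property: for every polynomial bound q, for all sufficiently large such n, whenever ĥ_n = f₁ + ... + f_s where each f_i ∈ G[x₀,...,x_{n−1}] is computable by a read-once oblivious algebraic branching program of size at most q(n), then s ≥ 2^{c·n^{1/500}}. -/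
/-- A (layered) algebraic branching program over `F` in variables `x_0, …, x_{n-1}`.
Layer `j` (for `0 ≤ j ≤ m`) has `width j` nodes, numbered `0, …, width j - 1`; layers `0`
and `m` consist of the single nodes `s` and `t`.  `label j u v = some e` means there is an
edge from node `u` of layer `j` to node `v` of layer `j+1` labeled by the constant or
variable `e`, and `label j u v = none` means there is no such edge. -/
structure ABP (F : Type) (n : ℕ) where
  m : ℕ
  width : ℕ → ℕ
  w0 : width 0 = 1
  wm : width m = 1
  label : ℕ → ℕ → ℕ → Option (F ⊕ Fin n)

namespace ABP

variable {F : Type} {n : ℕ}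

/-- The polynomial contributed by one edge label (`none`, i.e. a missing edge, contributes `0`). -/
noncomputable def edgeVal [Field F] : Option (F ⊕ Fin n) → MvPolynomial (Fin n) F
  | none => 0
  | some (Sum.inl c) => MvPolynomial.C c
  | some (Sum.inr i) => MvPolynomial.X i

/-- The polynomial computed by the ABP: the sum over all `s`-to-`t` paths of the product of
the edge labels along the path. -/
noncomputable def eval [Field F] (P : ABP F n) : MvPolynomial (Fin n) F :=
  ∑ π : (∀ i : Fin (P.m + 1), Fin (P.width i)), ∏ k : Fin P.m,
    edgeVal (P.label k (π k.castSucc) (π k.succ))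

/-- The size of an ABP is its number of nodes. -/
def size (P : ABP F n) : ℕ := ∑ i ∈ Finset.range (P.m + 1), P.width i

/-- `π` describes an `s`-to-`t` path: `π j` is the node of layer `j` used by the path. -/
def IsPath (P : ABP F n) (π : ℕ → ℕ) : Prop :=
  π 0 = 0 ∧ π P.m = 0 ∧ (∀ k, k ≤ P.m → π k < P.width k) ∧
    ∀ k, k < P.m → P.label k (π k) (π (k + 1)) ≠ none

/-- Syntactic multilinearity: on every `s`-to-`t` path, each variable appears at most once
as an edge label. -/
def SynMultilinear (P : ABP F n) : Prop :=
  ∀ π : ℕ → ℕ, P.IsPath π → ∀ x : Fin n,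
    {k : ℕ | k < P.m ∧ P.label k (π k) (π (k + 1)) = some (Sum.inr x)}.ncard ≤ 1

/-- The variable `x` appears as a label of an edge leaving layer `j`. -/
def VarInLayer (P : ABP F n) (x : Fin n) (j : ℕ) : Prop :=
  j < P.m ∧ ∃ u v : ℕ, u < P.width j ∧ v < P.width (j + 1) ∧
    P.label j u v = some (Sum.inr x)

/-- Obliviousness: for each layer, at most one variable appears on the edges leaving it. -/
def Oblivious (P : ABP F n) : Prop :=
  ∀ (j : ℕ) (x x' : Fin n), P.VarInLayer x j → P.VarInLayer x' j → x = x'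

/-- Each variable appears in at most one layer. -/
def ReadOnceVars (P : ABP F n) : Prop :=
  ∀ (x : Fin n) (j j' : ℕ), P.VarInLayer x j → P.VarInLayer x j' → j = j'

/-- A read-once oblivious ABP (ROABP): an oblivious syntactically multilinear ABP in which
each variable appears in at most one layer. -/
def IsROABP (P : ABP F n) : Prop :=
  P.Oblivious ∧ P.ReadOnceVars ∧ P.SynMultilinear

end ABP


namespace ABP

variable {F : Type} {n : ℕ} [Field F]

/-- weight of edge at a point -/
noncomputable def ew (P : ABP F n) (x : Fin n → F) (k u v : ℕ) : F :=
  MvPolynomial.eval x (edgeVal (P.label k u v))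

noncomputable def ev (P : ABP F n) (x : Fin n → F) : ℕ → ℕ → F
  | 0, v => if v = 0 then 1 else 0
  | k+1, v => ∑ u ∈ Finset.range (P.width k), ev P x k u * P.ew x k u v

lemma path_sum (width : ℕ → ℕ) (h0 : width 0 = 1) (g : ℕ → ℕ → ℕ → F) (e : ℕ → ℕ → F)
    (he0 : ∀ v, e 0 v = if v = 0 then 1 else 0)
    (he : ∀ k v, e (k+1) v = ∑ u ∈ Finset.range (width k), e k u * g k u v) (m : ℕ) :
    ∀ φ : ℕ → F,
    ∑ π : (∀ i : Fin (m + 1), Fin (width i)), (∏ k : Fin m, g k (π k.castSucc) (π k.succ)) *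
      φ (π (Fin.last m)) = ∑ v ∈ Finset.range (width m), e m v * φ v := by
  induction m with
  | zero =>
    intro φ
    have : ∀ π : (∀ i : Fin (0 + 1), Fin (width i)), (π (Fin.last 0) : ℕ) = 0 := by
      intro π
      have := (π (Fin.last 0)).2
      simp only [Fin.val_last] at this
      omega
    have hc : Fintype.card (∀ i : Fin (0 + 1), Fin (width i)) = 1 := by
      simp [h0]
    simp only [this]
    rw [h0]
    simp [he0, h0]
  | succ m ih =>
    intro φ
    rw [← (Fin.snocEquiv (fun i : Fin (m+2) => Fin (width i))).sum_comp]
    rw [Fintype.sum_prod_type]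
    rw [Finset.sum_comm]
    have h1 : ∀ (π : ∀ i : Fin (m + 1), Fin (width i)) (v : Fin (width (m+1))),
       (∏ k : Fin (m+1), g k ((Fin.snoc (α := fun i : Fin (m+2) => Fin (width i)) π v) k.castSucc)
          ((Fin.snoc (α := fun i : Fin (m+2) => Fin (width i)) π v) k.succ)) *
       φ ((Fin.snoc (α := fun i : Fin (m+2) => Fin (width i)) π v) (Fin.last (m+1)))
       = (∏ k : Fin m, g k (π k.castSucc) (π k.succ)) * (g m (π (Fin.last m)) v * φ v) := by
      intro π v
      rw [Fin.prod_univ_castSucc]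
      simp only [Fin.snoc_castSucc, Fin.succ_last, Fin.snoc_last]
      have : ∀ k : Fin m, (Fin.snoc (α := fun i : Fin (m+2) => Fin (width i)) π v) k.castSucc.succ = π k.succ := by
        intro k
        exact Fin.snoc_castSucc (α := fun i : Fin (m+2) => Fin (width i)) v π k.succ
      simp only [this]
      simp [mul_assoc]
    have h2 : ∀ (π : ∀ i : Fin (m + 1), Fin (width i)) , 
        ∑ v : Fin (width (m+1)), (∏ k : Fin m, g k (π k.castSucc) (π k.succ)) * (g m (π (Fin.last m)) v * φ v)
        = (∏ k : Fin m, g k (π k.castSucc) (π k.succ)) * (fun u => ∑ v ∈ Finset.range (width (m+1)), g m u v * φ v) (π (Fin.last m)) := by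
      intro π
      rw [← Finset.mul_sum]
      beta_reduce
      rw [Finset.sum_range]
    refine Eq.trans (Finset.sum_congr rfl fun π _ => Finset.sum_congr rfl fun v _ => h1 π v) ?_
    refine Eq.trans (Finset.sum_congr rfl fun π _ => h2 π) ?_
    refine Eq.trans (ih (fun u => ∑ v ∈ Finset.range (width (m+1)), g m u v * φ v)) ?_
    simp only [he, Finset.mul_sum, Finset.sum_mul]
    rw [Finset.sum_comm]
    simp only [mul_assoc]

lemma eval_eq_ev (P : ABP F n) (x : Fin n → F) : MvPolynomial.eval x P.eval = P.ev x P.m 0 := by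
  have := path_sum P.width P.w0 (P.ew x) (P.ev x) (fun v => rfl) (fun k v => rfl) P.m (fun _ => 1)
  rw [P.wm] at this
  simp only [mul_one, Finset.sum_range_one] at this
  rw [← this, eval]
  simp [map_sum, map_prod, ew]

/-- partial weights from node `u` of layer `a`. -/
noncomputable def tr (P : ABP F n) (x : Fin n → F) (a u : ℕ) : ℕ → ℕ → F
  | 0, v => if v = u then 1 else 0
  | d+1, v => ∑ u' ∈ Finset.range (P.width (a+d)), tr P x a u d u' * P.ew x (a+d) u' v

lemma ev_add (P : ABP F n) (x : Fin n → F) (a d : ℕ) : ∀ v, v < P.width (a+d) →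
    P.ev x (a+d) v = ∑ u ∈ Finset.range (P.width a), P.ev x a u * P.tr x a u d v := by
  induction d with
  | zero =>
    intro v hv
    simp only [tr]
    simp at hv
    simp [hv]
  | succ d ih =>
    intro v hv
    rw [← add_assoc, ev]
    simp only [tr]
    rw [Finset.sum_congr rfl (fun u hu => by rw [ih u (Finset.mem_range.1 hu)])]
    simp only [Finset.mul_sum, Finset.sum_mul]
    rw [Finset.sum_comm]
    simp only [mul_assoc]

lemma tr_congr (P : ABP F n) (x x' : Fin n → F) (a u d : ℕ) 
    (hx : ∀ i j, a ≤ j → j < a + d → P.VarInLayer i j → x i = x' i) (hm : a + d ≤ P.m) :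
    ∀ v, v < P.width (a+d) → P.tr x a u d v = P.tr x' a u d v := by
  induction d with
  | zero => intro v _; rfl
  | succ d ih =>
    intro v hv
    simp only [tr]
    refine Finset.sum_congr rfl fun u' hu' => ?_
    rw [ih (fun i j h1 h2 h3 => hx i j h1 (by omega) h3) (by omega) u' (Finset.mem_range.1 hu')]
    congr 1
    unfold ew
    rcases hl : P.label (a+d) u' v with _ | (c | i)
    · simp [edgeVal]
    · simp [edgeVal]
    · simp only [edgeVal, MvPolynomial.eval_X]
      exact hx i (a+d) (by omega) (by omega) ⟨by omega, u', v, Finset.mem_range.1 hu', hv, hl⟩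

end ABP

/-- decomposition into `R` products -/
def RankLE {V : Type} (Y : Set V) (f : (V → ZMod 2) → ZMod 2) (R : ℕ) : Prop :=
  ∃ (ι : Type) (_ : Fintype ι) (A B : ι → (V → ZMod 2) → ZMod 2), Fintype.card ι ≤ R ∧
    (∀ i, DependsOn (A i) Y) ∧ (∀ i, DependsOn (B i) Yᶜ) ∧ ∀ x, f x = ∑ i, A i x * B i x

namespace RankLE

variable {V : Type} {Y : Set V}

lemma symm {f R} (h : RankLE Y f R) : RankLE Yᶜ f R := by
  obtain ⟨ι, _, A, B, h1, h2, h3, h4⟩ := h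
  exact ⟨ι, _, B, A, h1, h3, by simpa using h2, fun x => by simp [h4, mul_comm]⟩

lemma mono {f R R'} (h : RankLE Y f R) (hR : R ≤ R') : RankLE Y f R' := by
  obtain ⟨ι, _, A, B, h1, h2⟩ := h
  exact ⟨ι, _, A, B, h1.trans hR, h2⟩

lemma mul {f g R R'} (hf : RankLE Y f R) (hg : RankLE Y g R') :
    RankLE Y (fun x => f x * g x) (R * R') := by
  obtain ⟨ι, _, A, B, h1, h2, h3, h4⟩ := hf
  obtain ⟨ι', _, A', B', h1', h2', h3', h4'⟩ := hg
  refine ⟨ι × ι', inferInstance, fun i x => A i.1 x * A' i.2 x, fun i x => B i.1 x * B' i.2 x, 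
    by rw [Fintype.card_prod]; exact Nat.mul_le_mul h1 h1', ?_, ?_, ?_⟩
  · intro i x y h
    simp only [h2 i.1 h, h2' i.2 h]
  · intro i x y h
    simp only [h3 i.1 h, h3' i.2 h]
  · intro x
    beta_reduce
    rw [h4, h4', Fintype.sum_mul_sum, Fintype.sum_prod_type]
    refine Finset.sum_congr rfl fun i _ => Finset.sum_congr rfl fun j _ => ?_
    ring

lemma zero : RankLE Y (fun _ => 0) 0 := by
  refine ⟨Empty, inferInstance, fun i => i.elim, fun i => i.elim, by simp, fun i => i.elim, fun i => i.elim, by simp⟩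

lemma add {f g R R'} (hf : RankLE Y f R) (hg : RankLE Y g R') :
    RankLE Y (fun x => f x + g x) (R + R') := by
  obtain ⟨ι, _, A, B, h1, h2, h3, h4⟩ := hf
  obtain ⟨ι', _, A', B', h1', h2', h3', h4'⟩ := hg
  refine ⟨ι ⊕ ι', inferInstance, Sum.elim A A', Sum.elim B B', 
    by rw [Fintype.card_sum]; exact Nat.add_le_add h1 h1', ?_, ?_, ?_⟩
  · rintro (i | i)
    · exact h2 i
    · exact h2' i
  · rintro (i | i)
    · exact h3 i
    · exact h3' i
  · intro x
    simp [h4, h4']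

lemma sum {κ : Type} (s : Finset κ) {f : κ → (V → ZMod 2) → ZMod 2} {R : ℕ}
    (h : ∀ i ∈ s, RankLE Y (f i) R) : RankLE Y (fun x => ∑ i ∈ s, f i x) (s.card * R) := by
  classical
  induction s using Finset.induction_on with
  | empty => simpa using zero
  | insert a s ha ih =>
    rw [Finset.card_insert_of_notMem ha]
    simp only [Finset.sum_insert ha]
    refine (add (h a (by simp)) (ih fun i hi => h i (by simp [hi]))).mono (le_of_eq (by ring))

lemma const (c : ZMod 2) : RankLE Y (fun _ => c) 1 := by
  refine ⟨Unit, inferInstance, fun _ _ => c, fun _ _ => 1, by simp, ?_, ?_, by simp⟩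
  · intro i x y _; rfl
  · intro i x y _; rfl

open Classical in
lemma small {f : (V → ZMod 2) → ZMod 2} (S : Finset V) (hf : DependsOn f (S : Set V)) :
    RankLE Y f (2 ^ (S.filter (· ∈ Y)).card) := by
  refine ⟨(S.filter (· ∈ Y)) → ZMod 2, inferInstance, 
    fun α x => if (∀ v, x v.1 = α v) then 1 else 0,
    fun α x => f (fun v => if h : v ∈ S.filter (· ∈ Y) then α ⟨v, h⟩ else if v ∈ Y then 0 else x v), ?_, ?_, ?_, ?_⟩
  · simp
  · intro α x y h
    have : (∀ v : (S.filter (· ∈ Y)), x v.1 = α v) ↔ (∀ v : (S.filter (· ∈ Y)), y v.1 = α v) := by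
      refine forall_congr' fun v => ?_
      rw [h v.1 (Finset.mem_filter.1 v.2).2]
    simp only [this]
  · intro α x y h
    refine congrArg f ?_
    funext v
    split_ifs with h1 h2
    · rfl
    · rfl
    · exact h v h2
  · intro x
    rw [Finset.sum_eq_single (fun v => x v.1)]
    · simp only [implies_true, if_true, one_mul]
      refine hf ?_
      intro v hv
      have hv : v ∈ S := hv
      by_cases hY : v ∈ Y <;> simp [hv, hY]
    · intro α _ hα
      beta_reduce
      rw [if_neg, zero_mul]
      intro h
      exact hα (funext fun v => (h v).symm)
    · simp

open Classical in
lemma small' {f : (V → ZMod 2) → ZMod 2} (S : Finset V) (hf : DependsOn f (S : Set V)) :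
    RankLE Y f (2 ^ min (S.filter (· ∈ Y)).card (S.filter (· ∉ Y)).card) := by
  rcases min_choice (S.filter (· ∈ Y)).card (S.filter (· ∉ Y)).card with h | h
  · rw [h]; exact small S hf
  · rw [h]
    have := (small (Y := Yᶜ) S hf).symm
    simpa using this

end RankLE

lemma exists_seg {V : Type} [Fintype V] (pos : V → ℕ) (m T M : ℕ) (hM : 0 < M) (hT : 0 < T)
    (hV : Fintype.card V = T * M) (hpos : ∀ v, pos v ≤ m)
    (hinj : ∀ v v', pos v < m → pos v = pos v' → v = v') :
    ∃ (seg : V → Fin T) (l : ℕ → ℕ), Monotone l ∧ l 0 = 0 ∧ l T = m ∧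
      (∀ k, Fintype.card {v // seg v = k} ≤ M) ∧
      ∀ v, pos v < m → l (seg v) ≤ pos v ∧ pos v < l (seg v + 1) := by
  classical
  let e0 : V ≃ Fin (T * M) := Fintype.equivFinOfCardEq hV
  let f : Fin (T * M) → ℕ := pos ∘ e0.symm
  let e : V ≃ Fin (T * M) := e0.trans (Tuple.sort f).symm
  have hmono : Monotone (fun i => pos (e.symm i)) := by
    have := Tuple.monotone_sort f
    exact this
  have hm : ∀ v v', e v ≤ e v' → pos v ≤ pos v' := by
    intro v v' h
    simpa using hmono h
  let l : ℕ → ℕ := fun k => if k = 0 then 0 else if h : k * M < T * M then pos (e.symm ⟨k * M, h⟩) else m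
  have lm : ∀ k, l k ≤ m := by
    intro k
    simp only [l]
    split_ifs
    · omega
    · exact hpos _
    · rfl
  refine ⟨fun v => ⟨e v / M, (Nat.div_lt_iff_lt_mul hM).2 (e v).2⟩, l, ?_, ?_, ?_, ?_, ?_⟩
  · refine monotone_nat_of_le_succ ?_
    intro k
    by_cases h0 : k = 0
    · simp [l, h0]
    by_cases h1 : (k+1) * M < T * M
    · have h2 : k * M < T * M := by nlinarith
      simp only [l, h0, h1, h2, dif_pos, if_false, Nat.succ_ne_zero]
      refine hmono ?_
      simp only [Fin.mk_le_mk]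
      nlinarith
    · have : l (k+1) = m := by simp [l, h1]
      rw [this]; exact lm k
  · simp [l]
  · simp [l, hT.ne']
  · intro k
    have : Function.Injective (fun v : {v // (⟨e v / M, (Nat.div_lt_iff_lt_mul hM).2 (e v).2⟩ : Fin T) = k} => 
      (⟨e v.1 % M, Nat.mod_lt _ hM⟩ : Fin M)) := by
      rintro ⟨v, hv⟩ ⟨v', hv'⟩ h
      simp only [Fin.mk.injEq] at h
      have h1 := congrArg Fin.val hv
      have h2 := congrArg Fin.val hv'
      simp only at h1 h2
      have h3 : (e v : ℕ) = e v' := by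
        rw [← Nat.div_add_mod (e v) M, ← Nat.div_add_mod (e v') M, h1, h2, h]
      simp only [Subtype.mk.injEq]
      exact e.injective (Fin.ext h3)
    simpa using Fintype.card_le_of_injective _ this
  · intro v hv
    constructor
    · simp only [l]
      split_ifs with h0 h1
      · omega
      · have := hmono (a := ⟨e v / M * M, h1⟩) (b := e v) (by rw [Fin.le_def]; exact Nat.div_mul_le_self _ _)
        simpa using this
      · exact absurd (lt_of_le_of_lt (Nat.div_mul_le_self (e v) M) (e v).2) h1
    · simp only [l, Nat.succ_ne_zero, if_false]
      split_ifs with h1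
      · have hlt : (e v : ℕ) < (e v / M + 1) * M := by
          rw [add_mul, one_mul]; exact Nat.lt_div_mul_add hM
        have := hmono (a := e v) (b := ⟨(e v / M + 1) * M, h1⟩) (by rw [Fin.le_def]; exact hlt.le)
        simp only [Equiv.symm_apply_apply] at this
        refine lt_of_le_of_ne this fun h => ?_
        have := hinj _ _ hv h
        have := congrArg (fun v => (e v : ℕ)) this
        simp only [Equiv.apply_symm_apply] at this
        omega
      · exact hv

open Classical in
/-- smaller side in segment `k` -/
noncomputable def mn {V : Type} [Fintype V] {T : ℕ} (seg : V → Fin T) (Y : Set V) (k : ℕ) : ℕ :=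
  min ((Finset.univ.filter (fun v => (seg v : ℕ) = k)).filter (· ∈ Y)).card
    ((Finset.univ.filter (fun v => (seg v : ℕ) = k)).filter (· ∉ Y)).card

lemma roabp_rank {V : Type} [Fintype V] {n : ℕ} (em : V → Fin n) (hem : Function.Injective em)
    (P : ABP (ZMod 2) n) (hP : P.IsROABP) (w : ℕ) (hw : P.size ≤ w) (T M : ℕ) (hM : 0 < M) (hT : 0 < T)
    (hV : Fintype.card V = T * M) :
    ∃ seg : V → Fin T, (∀ k, Fintype.card {v // seg v = k} ≤ M) ∧
      ∀ (pt : (V → ZMod 2) → (Fin n → ZMod 2)), (∀ z v, pt z (em v) = z v) →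
        (∀ z z' i, i ∉ Set.range em → pt z i = pt z' i) → ∀ Y : Set V,
        RankLE Y (fun z => MvPolynomial.eval (pt z) P.eval)
          (w ^ T * 2 ^ (∑ k ∈ Finset.range T, mn seg Y k)) := by
  classical
  obtain ⟨hobl, hro, -⟩ := hP
  let pos : V → ℕ := fun v => if h : ∃ j, P.VarInLayer (em v) j then h.choose else P.m
  have hpos1 : ∀ v j, P.VarInLayer (em v) j → pos v = j := by
    intro v j hj
    have h : ∃ j, P.VarInLayer (em v) j := ⟨j, hj⟩
    simp only [pos, dif_pos h]
    exact hro _ _ _ h.choose_spec hj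
  have hpos2 : ∀ v, pos v < P.m → P.VarInLayer (em v) (pos v) := by
    intro v hv
    by_cases h : ∃ j, P.VarInLayer (em v) j
    · simp only [pos, dif_pos h]; exact h.choose_spec
    · simp [pos, dif_neg h] at hv
  have hpos3 : ∀ v, pos v ≤ P.m := by
    intro v
    by_cases h : ∃ j, P.VarInLayer (em v) j
    · simp only [pos, dif_pos h]; exact h.choose_spec.1.le
    · simp [pos, dif_neg h]
  obtain ⟨seg, l, lmono, l0, lT, hfib, hl⟩ := exists_seg pos P.m T M hM hT hV hpos3 (by
    intro v v' hv hvv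
    have h1 := hpos2 v hv
    have h2 := hpos2 v' (hvv ▸ hv)
    rw [← hvv] at h2
    exact hem (hobl _ _ _ h1 h2))
  refine ⟨seg, hfib, ?_⟩
  intro pt hpt1 hpt2 Y
  have hwid : ∀ k, k ≤ P.m → P.width k ≤ w := by
    intro k hk
    refine le_trans ?_ hw
    exact Finset.single_le_sum (f := P.width) (fun _ _ => Nat.zero_le _) (Finset.mem_range.2 (by omega))
  have key : ∀ k, k ≤ T → ∀ v, v < P.width (l k) →
      RankLE Y (fun z => P.ev (pt z) (l k) v) (w ^ k * 2 ^ (∑ k ∈ Finset.range k, mn seg Y k)) := by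
    intro k
    induction k with
    | zero =>
      intro _ v _
      simp only [l0, ABP.ev]
      simpa using RankLE.const _
    | succ k ih =>
      intro hk v hv
      have hlk : l k ≤ l (k+1) := lmono (by omega)
      have hlk' : l (k+1) ≤ P.m := lT ▸ lmono hk
      obtain ⟨d, hd⟩ := Nat.exists_eq_add_of_le hlk
      rw [hd] at hv ⊢
      have e1 : (fun z => P.ev (pt z) (l k + d) v) = fun z => ∑ u ∈ Finset.range (P.width (l k)),
          P.ev (pt z) (l k) u * P.tr (pt z) (l k) u d v := by
        funext z
        exact P.ev_add _ _ _ _ hv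
      rw [e1]
      refine (RankLE.sum (R := (w ^ k * 2 ^ (∑ k ∈ Finset.range k, mn seg Y k)) * 2 ^ (mn seg Y k)) _ ?_).mono ?_
      · intro u hu
        refine RankLE.mul (ih (by omega) u (Finset.mem_range.1 hu)) ?_
        refine RankLE.small' (Finset.univ.filter (fun v => (seg v : ℕ) = k)) ?_
        intro z z' hz
        refine P.tr_congr _ _ _ _ _ ?_ (by omega) v hv
        intro i j h1 h2 h3
        by_cases hi : i ∈ Set.range em
        · obtain ⟨v', rfl⟩ := hi
          rw [hpt1, hpt1]
          apply hz
          have hp := hpos1 v' j h3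
          have := hl v' (by rw [hp]; exact h3.1)
          rw [hp] at this
          simp only [Finset.coe_filter, Finset.mem_univ, true_and, Set.mem_ofPred_eq]
          by_contra hne
          rcases Nat.lt_or_gt_of_ne hne with h | h
          · have := lmono (show (seg v' : ℕ) + 1 ≤ k from h)
            omega
          · have := lmono (show k + 1 ≤ (seg v' : ℕ) from h)
            omega
        · exact hpt2 _ _ _ hi
      · rw [Finset.card_range, Finset.sum_range_succ, pow_succ, pow_add]
        have := hwid (l k) (by omega)
        calc _ ≤ w * (w ^ k * 2 ^ (∑ k ∈ Finset.range k, mn seg Y k) * 2 ^ (mn seg Y k)) := by gcongr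
          _ = _ := by ring
  have := key T le_rfl 0 (by rw [lT, P.wm]; exact one_pos)
  rw [lT] at this
  simpa only [ABP.eval_eq_ev] using this

/-- The matching polynomial has full rank. -/
lemma full_rank {Q : Type} [Fintype Q] (mate : Q ≃ Q) (ε : Q → Bool) (R : ℕ)
    (h : RankLE (V := Q ⊕ Q) {v | Sum.elim (fun p => ε p = true) (fun p => ε (mate.symm p) = false) v}
      (fun z => ∏ p, (z (Sum.inl p) + z (Sum.inr (mate p)))) R) :
    2 ^ Fintype.card Q ≤ R := by
  classical
  obtain ⟨ι, _, A, B, h1, h2, h3, h4⟩ := h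
  refine le_trans ?_ h1
  set Y : Set (Q ⊕ Q) := {v | Sum.elim (fun p => ε p = true) (fun p => ε (mate.symm p) = false) v} with hY
  -- points
  let ay : (Q → ZMod 2) → (Q ⊕ Q → ZMod 2) := fun y => Sum.elim y (fun p => y (mate.symm p))
  let pt : (Q → ZMod 2) → (Q → ZMod 2) → (Q ⊕ Q → ZMod 2) := fun y y' v => 
    if v ∈ Y then ay y v else ay y' v + 1
  let MA : Matrix (Q → ZMod 2) ι (ZMod 2) := fun y i => A i (ay y)
  let MB : Matrix ι (Q → ZMod 2) (ZMod 2) := fun i y' => B i (fun v => ay y' v + 1)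
  have hmul : MA * MB = 1 := by
    ext y y'
    rw [Matrix.mul_apply]
    have e1 : ∑ i, MA y i * MB i y' = ∑ i, A i (pt y y') * B i (pt y y') := by
      refine Finset.sum_congr rfl fun i _ => ?_
      congr 1
      · refine h2 i fun v hv => ?_
        simp only [pt, if_pos hv]
      · refine h3 i fun v hv => ?_
        simp only [pt, if_neg hv]
    rw [e1, ← h4]
    have e2 : ∀ p, pt y y' (Sum.inl p) + pt y y' (Sum.inr (mate p)) = y p + y' p + 1 := by
      intro p
      cases hε : ε p <;> simp [pt, hY, hε, ay] <;> ring
    simp only [e2]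
    rw [Matrix.one_apply]
    split_ifs with hyy
    · subst hyy
      refine Finset.prod_eq_one fun p _ => ?_
      rw [CharTwo.add_self_eq_zero, zero_add]
    · obtain ⟨p, hp⟩ := Function.ne_iff.1 hyy
      refine Finset.prod_eq_zero (Finset.mem_univ p) ?_
      revert hp
      generalize y p = a
      generalize y' p = b
      revert a b
      decide
  have := Matrix.rank_mul_le_left MA MB
  rw [hmul, Matrix.rank_one] at this
  have h5 := Matrix.rank_le_card_width MA
  have : Fintype.card (Q → ZMod 2) ≤ Fintype.card ι := this.trans h5
  simpa using this

lemma sum_range_two_mul' {A : Type} [AddCommMonoid A] (f : ℕ → A) (N : ℕ) :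
    ∑ u ∈ Finset.range (2 * N), f u = ∑ ρ ∈ Finset.range N, (f (2 * ρ) + f (2 * ρ + 1)) := by
  induction N with
  | zero => simp
  | succ N ih =>
    rw [Finset.sum_range_succ, ← ih, show 2 * (N + 1) = 2 * N + 1 + 1 by ring,
      Finset.sum_range_succ, Finset.sum_range_succ, add_assoc]

section hard

variable (t N : ℕ) [NeZero t] [NeZero N] {n : ℕ} (e : Fin 3 × Fin t × Fin N → Fin n)

/-- The branching program computing the hard polynomial. -/
def hardABP : ABP (ZMod 2) n where
  m := t * (N + 1) + 1
  width k := if k = 0 ∨ k = t * (N + 1) + 1 then 1 else 2 * N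
  w0 := by simp
  wm := by simp
  label k u v :=
    if k = t * (N + 1) then some (Sum.inl 1)
    else if k % (N + 1) = 0 then
      (if v % 2 = 0 then some (Sum.inr (e (0, Fin.ofNat t (k / (N + 1)), Fin.ofNat N (v / 2)))) else none)
    else if u / 2 = v / 2 then
      some (Sum.inr (if v % 2 = 0 then e (1, Fin.ofNat t (k / (N + 1)), Fin.ofNat N (k % (N + 1) - 1))
        else e (2, Fin.ofNat t (k / (N + 1)), Fin.ofNat N (k % (N + 1) - 1) + Fin.ofNat N (v / 2))))
    else none

variable {t N}

lemma ofNat_inj' {a b N : ℕ} [NeZero N] (ha : a < N) (hb : b < N) (h : Fin.ofNat N a = Fin.ofNat N b) : a = b := by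
  have := congrArg Fin.val h
  simpa [Fin.ofNat, Nat.mod_eq_of_lt ha, Nat.mod_eq_of_lt hb] using this

lemma hardABP_label {k u v : ℕ} {x : Fin n} (hk : k < t * (N + 1) + 1)
    (h : (hardABP t N e).label k u v = some (Sum.inr x)) :
    k / (N + 1) < t ∧ ∃ tag c, x = e (tag, Fin.ofNat t (k / (N + 1)), c) ∧ 
     ((tag = 0 ∧ k % (N + 1) = 0) ∨ (tag = 1 ∧ k % (N + 1) ≠ 0 ∧ c = Fin.ofNat N (k % (N + 1) - 1)) ∨
     (tag = 2 ∧ k % (N + 1) ≠ 0 ∧ c = Fin.ofNat N (k % (N + 1) - 1) + Fin.ofNat N (v / 2))) := by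
  simp only [hardABP] at h
  split_ifs at h with h1 h2 h3 h4 h5
  · simp at h
  all_goals
    have hk' : k < t * (N + 1) := by omega
    refine ⟨(Nat.div_lt_iff_lt_mul (by omega)).2 hk', ?_⟩
    simp only [Option.some.injEq, Sum.inr.injEq] at h
  · exact ⟨_, _, h.symm, Or.inl ⟨rfl, h2⟩⟩
  · exact ⟨_, _, h.symm, Or.inr (Or.inl ⟨rfl, h2, rfl⟩)⟩
  · exact ⟨_, _, h.symm, Or.inr (Or.inr ⟨rfl, h2, rfl⟩)⟩

lemma hardABP_path {π : ℕ → ℕ} (hπ : (hardABP t N e).IsPath π) {i : ℕ} (hi : i < t) (τ : ℕ) (h0 : 1 ≤ τ) (hτ : τ ≤ N + 1) :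
    π (i * (N + 1) + τ) / 2 = π (i * (N + 1) + 1) / 2 := by
  obtain ⟨-, -, -, hπ⟩ := hπ
  induction τ with
  | zero => omega
  | succ τ ih =>
    rcases Nat.eq_zero_or_pos τ with h | h
    · subst h; rfl
    · rw [← ih h (by omega)]
      have hlt : i * (N + 1) + τ < t * (N + 1) := by nlinarith
      have := hπ (i * (N + 1) + τ) (by simp only [hardABP]; omega)
      simp only [hardABP] at this
      rw [if_neg hlt.ne, if_neg] at this
      · by_cases h5 : π (i * (N + 1) + τ) / 2 = π (i * (N + 1) + τ + 1) / 2
        · rw [← add_assoc, h5]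
        · rw [if_neg h5] at this
          exact absurd rfl this
      · rw [Nat.mul_add_mod_self_right, Nat.mod_eq_of_lt (by omega)]
        omega

lemma hardABP_synMultilinear (he : Function.Injective e) : (hardABP t N e).SynMultilinear := by
  intro π hπ x
  rw [Set.ncard_le_one ((Set.finite_lt_nat (hardABP t N e).m).subset fun k hk => hk.1)]
  rintro k ⟨hk, hl⟩ k' ⟨hk', hl'⟩
  obtain ⟨h1, tag, c, hx, hc⟩ := hardABP_label e hk hl
  obtain ⟨h1', tag', c', hx', hc'⟩ := hardABP_label e hk' hl'
  have := he (hx.symm.trans hx')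
  simp only [Prod.mk.injEq] at this
  obtain ⟨rfl, hi, rfl⟩ := this
  have hi := ofNat_inj' h1 h1' hi
  have hdm := Nat.div_add_mod k (N + 1)
  have hdm' := Nat.div_add_mod k' (N + 1)
  have hlt : k % (N + 1) < N + 1 := Nat.mod_lt k (Nat.succ_pos N)
  have hlt' : k' % (N + 1) < N + 1 := Nat.mod_lt k' (Nat.succ_pos N)
  suffices k % (N + 1) = k' % (N + 1) by rw [← hdm, ← hdm', hi, this]
  rcases hc with ⟨hc, h2⟩ | ⟨hc, h2, h3⟩ | ⟨hc, h2, h3⟩ <;>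
  rcases hc' with ⟨hc', h2'⟩ | ⟨hc', h2', h3'⟩ | ⟨hc', h2', h3'⟩ <;>
  try (exact absurd (hc.symm.trans hc') (by decide))
  · omega
  · have := ofNat_inj' (by omega) (by omega) (h3.symm.trans h3')
    omega
  · have e1 := hardABP_path e hπ h1 (k % (N + 1) + 1) (by omega) (by omega)
    have e2 := hardABP_path e hπ h1' (k' % (N + 1) + 1) (by omega) (by omega)
    have e3 : k / (N + 1) * (N + 1) + (k % (N + 1) + 1) = k + 1 := by
      rw [mul_comm]; omega
    have e3' : k' / (N + 1) * (N + 1) + (k' % (N + 1) + 1) = k' + 1 := by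
      rw [mul_comm]; omega
    rw [e3] at e1
    rw [e3'] at e2
    rw [hi, ← e2] at e1
    rw [h3, e1] at h3'
    have := ofNat_inj' (by omega) (by omega) (add_right_cancel h3')
    omega

lemma hardABP_size : (hardABP t N e).size ≤ (t * (N + 1) + 2) * (2 * N + 1) := by
  unfold ABP.size
  refine (Finset.sum_le_card_nsmul _ _ (2 * N + 1) ?_).trans ?_
  · intro i _
    simp only [hardABP]
    split_ifs <;> omega
  · simp [hardABP]

lemma hardABP_eval (x : Fin n → ZMod 2) (r : Fin t → Fin N)
    (hx : ∀ i ρ, x (e (0, i, ρ)) = if ρ = r i then 1 else 0) :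
    MvPolynomial.eval x (hardABP t N e).eval =
      ∏ p : Fin t × Fin N, (x (e (1, p)) + x (e (2, (p.1, p.2 + r p.1)))) := by
  have hN : 0 < N := Nat.pos_of_ne_zero (NeZero.ne N)
  rw [ABP.eval_eq_ev]
  set P := hardABP t N e with hP
  let g : ℕ → ℕ → ZMod 2 := fun i j => x (e (1, Fin.ofNat t i, Fin.ofNat N j)) +
    x (e (2, Fin.ofNat t i, Fin.ofNat N j + r (Fin.ofNat t i)))
  let C : ℕ → ZMod 2 := fun i => ∏ i' ∈ Finset.range i, ∏ j ∈ Finset.range N, g i' j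
  have hw : ∀ k, 0 < k → k ≤ t * (N + 1) → P.width k = 2 * N := by
    intro k h1 h2
    simp only [hP, hardABP]
    rw [if_neg (by omega)]
  have main : ∀ i, i ≤ t → ∑ u ∈ Finset.range (P.width (i * (N + 1))), P.ev x (i * (N + 1)) u = C i := by
    intro i
    induction i with
    | zero =>
      intro _
      simp [P.w0, C, ABP.ev]
    | succ i ih =>
      intro hi
      have ih := ih (by omega)
      have hit : (i + 1) * (N + 1) ≤ t * (N + 1) := Nat.mul_le_mul_right _ hi
      have hit' : i * (N + 1) + (N + 1) ≤ t * (N + 1) := by rw [← Nat.succ_mul]; exact hit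
      have inner : ∀ τ, τ ≤ N → ∀ ρ, ρ < N → 
          P.ev x (i * (N + 1) + τ + 1) (2 * ρ) + P.ev x (i * (N + 1) + τ + 1) (2 * ρ + 1) =
          if Fin.ofNat N ρ = r (Fin.ofNat t i) then C i * ∏ j ∈ Finset.range τ, g i j else 0 := by
        intro τ
        induction τ with
        | zero =>
          intro _ ρ hρ
          have hne : i * (N + 1) ≠ t * (N + 1) := by omega
          have h1 : ∀ u, P.ew x (i * (N + 1)) u (2 * ρ) = if Fin.ofNat N ρ = r (Fin.ofNat t i) then 1 else 0 := by
            intro u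
            simp only [ABP.ew, hP, hardABP]
            rw [if_neg hne, if_pos (by simp), if_pos (by simp)]
            simp only [ABP.edgeVal, MvPolynomial.eval_X]
            rw [Nat.mul_div_cancel _ (by omega), Nat.mul_div_cancel_left _ (by omega), hx]
          have h2 : ∀ u, P.ew x (i * (N + 1)) u (2 * ρ + 1) = 0 := by
            intro u
            simp only [ABP.ew, hP, hardABP]
            rw [if_neg hne, if_pos (by simp), if_neg (by omega)]
            simp [ABP.edgeVal]
          simp only [add_zero, ABP.ev, h1, h2, mul_zero, Finset.sum_const_zero, Finset.range_zero, Finset.prod_empty, mul_one]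
          rw [← Finset.sum_mul, ih]
          simp
        | succ τ ihτ =>
          intro hτ ρ hρ
          have ihτ := ihτ (by omega) ρ hρ
          have hne : i * (N + 1) + τ + 1 ≠ t * (N + 1) := by omega
          have hmod : (i * (N + 1) + τ + 1) % (N + 1) = τ + 1 := by
            rw [add_assoc, Nat.mul_add_mod_self_right, Nat.mod_eq_of_lt (by omega)]
          have hdiv : (i * (N + 1) + τ + 1) / (N + 1) = i := by
            rw [add_assoc, mul_comm, Nat.mul_add_div (by omega), Nat.div_eq_of_lt (by omega), add_zero]
          have h1 : ∀ u, P.ew x (i * (N + 1) + τ + 1) u (2 * ρ) = 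
              if u / 2 = ρ then x (e (1, Fin.ofNat t i, Fin.ofNat N τ)) else 0 := by
            intro u
            simp only [ABP.ew, hP, hardABP]
            rw [if_neg hne, hmod, if_neg (by omega), hdiv]
            rw [Nat.mul_div_cancel_left _ (by omega)]
            split_ifs with h1 h2
            · simp [ABP.edgeVal]
            · omega
            · simp [ABP.edgeVal]
          have h2 : ∀ u, P.ew x (i * (N + 1) + τ + 1) u (2 * ρ + 1) = 
              if u / 2 = ρ then x (e (2, Fin.ofNat t i, Fin.ofNat N τ + Fin.ofNat N ρ)) else 0 := by
            intro u
            simp only [ABP.ew, hP, hardABP]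
            rw [if_neg hne, hmod, if_neg (by omega), hdiv]
            rw [show (2 * ρ + 1) / 2 = ρ by omega]
            split_ifs with h1 h2
            · omega
            · simp [ABP.edgeVal]
            · simp [ABP.edgeVal]
          have hsum : ∀ a : ZMod 2, ∑ u ∈ Finset.range (P.width (i * (N + 1) + τ + 1)), 
              P.ev x (i * (N + 1) + τ + 1) u * (if u / 2 = ρ then a else 0) = 
              (P.ev x (i * (N + 1) + τ + 1) (2 * ρ) + P.ev x (i * (N + 1) + τ + 1) (2 * ρ + 1)) * a := by
            intro a
            rw [hw _ (by omega) (by omega), sum_range_two_mul', Finset.sum_eq_single ρ]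
            · rw [if_pos (by omega), if_pos (by omega)]; ring
            · intro b _ hb
              rw [if_neg (by omega), if_neg (by omega)]; ring
            · intro h; exact absurd (Finset.mem_range.2 hρ) h
          have ev1 : ∀ v, P.ev x (i * (N + 1) + (τ + 1) + 1) v = ∑ u ∈ Finset.range (P.width (i * (N + 1) + τ + 1)), 
              P.ev x (i * (N + 1) + τ + 1) u * P.ew x (i * (N + 1) + τ + 1) u v := fun v => rfl
          rw [ev1, ev1]
          simp only [h1, h2]
          rw [hsum, hsum, ihτ, Finset.prod_range_succ]
          split_ifs with hr
          · rw [hr]; simp only [g]; ring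
          · ring
      rw [Nat.succ_mul, hw _ (by omega) (by omega), sum_range_two_mul']
      rw [Finset.sum_congr rfl (fun ρ hρ => by rw [← add_assoc, inner N le_rfl ρ (Finset.mem_range.1 hρ)])]
      rw [Finset.sum_eq_single (r (Fin.ofNat t i) : ℕ)]
      · rw [if_pos (by simp)]
        simp only [C]
        rw [Finset.prod_range_succ]
      · intro b hb hne
        rw [if_neg]
        intro h
        apply hne
        rw [← h]
        simp [Fin.ofNat, Nat.mod_eq_of_lt (Finset.mem_range.1 hb)]
      · intro h; exact absurd (Finset.mem_range.2 (r (Fin.ofNat t i)).2) h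
  have hfin : P.ev x P.m 0 = ∑ u ∈ Finset.range (P.width (t * (N + 1))), P.ev x (t * (N + 1)) u * P.ew x (t * (N + 1)) u 0 := rfl
  have hone : ∀ u, P.ew x (t * (N + 1)) u 0 = 1 := by
    intro u
    simp [ABP.ew, hP, hardABP, ABP.edgeVal]
  rw [hfin]
  simp only [hone, mul_one]
  rw [main t le_rfl]
  simp only [C]
  rw [Finset.prod_range, Fintype.prod_prod_type]
  refine Finset.prod_congr rfl fun i _ => ?_
  rw [Finset.prod_range]
  refine Finset.prod_congr rfl fun j _ => ?_
  simp [g]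

end hard

lemma degreeOf_le_one {F : Type} [Field F] {n : ℕ} (P : ABP F n) (hP : P.SynMultilinear) (i : Fin n) :
    P.eval.degreeOf i ≤ 1 := by
  classical
  unfold ABP.eval
  refine (MvPolynomial.degreeOf_sum_le i _ _).trans (Finset.sup_le fun π _ => ?_)
  by_cases h0 : ∃ k : Fin P.m, P.label k (π k.castSucc) (π k.succ) = none
  · obtain ⟨k, hk⟩ := h0
    rw [Finset.prod_eq_zero (Finset.mem_univ k) (by rw [hk]; rfl)]
    simp
  push Not at h0
  let π' : ℕ → ℕ := fun k => if h : k < P.m + 1 then π ⟨k, h⟩ else 0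
  have e1 : ∀ k : Fin P.m, π' k = π k.castSucc := by
    intro k
    simp only [π']
    rw [dif_pos (by omega)]; rfl
  have e2 : ∀ k : Fin P.m, π' (k + 1) = π k.succ := by
    intro k
    simp only [π']
    rw [dif_pos (by omega)]; rfl
  have hlt : ∀ k, k ≤ P.m → π' k < P.width k := by
    intro k hk
    simp only [π']
    rw [dif_pos (by omega)]
    exact (π ⟨k, _⟩).2
  have hpath : P.IsPath π' := by
    refine ⟨?_, ?_, hlt, ?_⟩
    · have := hlt 0 (by omega); rw [P.w0] at this; omega
    · have := hlt P.m le_rfl; rw [P.wm] at this; omega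
    · intro k hk
      have := h0 ⟨k, hk⟩
      rw [← e1, ← e2] at this
      exact this
  have hcard := hP π' hpath i
  have hfin : {k : ℕ | k < P.m ∧ P.label k (π' k) (π' (k + 1)) = some (Sum.inr i)}.Finite :=
    (Set.finite_lt_nat P.m).subset fun k hk => hk.1
  refine (MvPolynomial.degreeOf_prod_le i _ _).trans ?_
  have hd : ∀ k : Fin P.m, MvPolynomial.degreeOf i (ABP.edgeVal (P.label k (π k.castSucc) (π k.succ))) ≤
      if P.label k (π' k) (π' (k + 1)) = some (Sum.inr i) then 1 else 0 := by
    intro k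
    rw [e1, e2]
    rcases P.label k (π k.castSucc) (π k.succ) with _ | (c | j)
    · simp [ABP.edgeVal]
    · simp [ABP.edgeVal]
    · simp only [ABP.edgeVal, MvPolynomial.degreeOf_X]
      by_cases h : i = j
      · simp [h]
      · simp [h]
  refine (Finset.sum_le_sum fun k _ => hd k).trans ?_
  rw [← Finset.card_filter]
  refine le_trans ?_ hcard
  rw [Set.ncard_eq_toFinset_card _ hfin]
  refine Finset.card_le_card_of_injOn (fun k => (k : ℕ)) ?_ ?_
  · intro k hk
    simp at hk ⊢
    exact hk
  · intro a _ b _ h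
    exact Fin.ext h

lemma cb_bound (n : ℕ) : n.centralBinom ^ 2 * (2 * n + 1) ≤ 16 ^ n := by
  induction n with
  | zero => simp
  | succ n ih =>
    have h := Nat.succ_mul_centralBinom_succ n
    have h2 : (n + 1) ^ 2 * ((n + 1).centralBinom ^ 2 * (2 * (n + 1) + 1)) ≤ (n + 1) ^ 2 * 16 ^ (n + 1) := by
      calc (n + 1) ^ 2 * ((n + 1).centralBinom ^ 2 * (2 * (n + 1) + 1))
          = ((n + 1) * (n + 1).centralBinom) ^ 2 * (2 * (n + 1) + 1) := by ring
        _ = (n.centralBinom ^ 2 * (2 * n + 1)) * (4 * ((2 * n + 1) * (2 * (n + 1) + 1))) := by rw [h]; ring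
        _ ≤ 16 ^ n * (4 * (4 * (n + 1) ^ 2)) := by
            refine Nat.mul_le_mul ih (Nat.mul_le_mul_left _ ?_)
            nlinarith
        _ = _ := by ring
    exact Nat.le_of_mul_le_mul_left h2 (by positivity)

lemma cb_bound2 (K : ℕ) : 2 * (K * (2 * K ^ 2).centralBinom) ≤ 2 ^ (4 * K ^ 2) := by
  have h := cb_bound (2 * K ^ 2)
  have h2 : (2 * (K * (2 * K ^ 2).centralBinom)) ^ 2 ≤ (2 ^ (4 * K ^ 2)) ^ 2 := by
    calc (2 * (K * (2 * K ^ 2).centralBinom)) ^ 2 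
        = (2 * K ^ 2).centralBinom ^ 2 * (4 * K ^ 2) := by ring
      _ ≤ (2 * K ^ 2).centralBinom ^ 2 * (2 * (2 * K ^ 2) + 1) := Nat.mul_le_mul_left _ (by omega)
      _ ≤ 16 ^ (2 * K ^ 2) := h
      _ = _ := by
        rw [show (16 : ℕ) = 2 ^ 4 by norm_num, ← pow_mul, ← pow_mul]
        congr 1
        ring
  exact (Nat.pow_le_pow_iff_left (by norm_num)).1 h2

lemma anti {Q : Type} [DecidableEq Q] (E : Finset Q) (τ : Q → ℤ) (hτ : ∀ q ∈ E, τ q = 1 ∨ τ q = -1)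
    (c0 : ℤ) (K : ℕ) (hE : E.card = 4 * K ^ 2) :
    2 * (E.powerset.filter (fun S => |c0 - 2 * ∑ q ∈ S, τ q| < K)).card ≤ 2 ^ E.card := by
  let Em := E.filter (fun q => τ q = -1)
  have hsum : ∀ S ∈ E.powerset, ∑ q ∈ S, τ q = ((symmDiff S Em).card : ℤ) - Em.card := by
    intro S hS
    have hS := Finset.mem_powerset.1 hS
    have e1 : symmDiff S Em = (S \ Em) ∪ (Em \ S) := rfl
    have hd : Disjoint (S \ Em) (Em \ S) := disjoint_sdiff_sdiff
    rw [e1, Finset.card_union_of_disjoint hd]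
    have h1 := Finset.card_sdiff_add_card_inter Em S
    have h2 : ∑ q ∈ S, τ q = ∑ q ∈ S \ Em, τ q + ∑ q ∈ Em ∩ S, τ q := by
      rw [← Finset.sum_union]
      · congr 1
        ext q
        simp only [Finset.mem_union, Finset.mem_sdiff, Finset.mem_inter]
        tauto
      · rw [Finset.disjoint_left]
        intro q; simp only [Finset.mem_sdiff, Finset.mem_inter]; tauto
    have h3 : ∑ q ∈ S \ Em, τ q = ((S \ Em).card : ℤ) := by
      rw [Finset.sum_congr rfl (g := fun _ => (1 : ℤ))]
      · simp
      · intro q hq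
        simp only [Em, Finset.mem_sdiff, Finset.mem_filter] at hq
        have := hτ q (hS hq.1)
        have h4 := hS hq.1
        tauto
    have h4 : ∑ q ∈ Em ∩ S, τ q = -((Em ∩ S).card : ℤ) := by
      rw [Finset.sum_congr rfl (g := fun _ => (-1 : ℤ))]
      · simp
      · intro q hq
        simp only [Em, Finset.mem_inter, Finset.mem_filter] at hq
        exact hq.1.2
    rw [h2, h3, h4]
    push_cast [← h1]
    ring
  let J := (Finset.range (E.card + 1)).filter (fun j : ℕ => |c0 - 2 * ((j : ℤ) - Em.card)| < K)
  have hmem : ∀ j ∈ J, |c0 - 2 * ((j : ℤ) - Em.card)| < K := fun j hj => (Finset.mem_filter.1 hj).2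
  have hJ : J.card ≤ K := by
    by_cases hne : J.Nonempty
    · have hsub : J ⊆ Finset.Ico (J.min' hne) (J.min' hne + K) := by
        intro j hj
        have h1 := J.min'_le j hj
        have h2 := abs_lt.1 (hmem _ (J.min'_mem hne))
        have h3 := abs_lt.1 (hmem _ hj)
        rw [Finset.mem_Ico]
        refine ⟨h1, ?_⟩
        generalize J.min' hne = a at *
        omega
      simpa using Finset.card_le_card hsub
    · rw [Finset.not_nonempty_iff_eq_empty] at hne
      simp [hne]
  have hcard : (E.powerset.filter (fun S => |c0 - 2 * ∑ q ∈ S, τ q| < K)).card ≤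
      (J.biUnion (fun j => E.powersetCard j)).card := by
    refine Finset.card_le_card_of_injOn (fun S => symmDiff S Em) ?_ ?_
    · intro S hS
      have hS := Finset.mem_filter.1 (Finset.mem_coe.1 hS)
      rw [hsum S hS.1] at hS
      have hsub : symmDiff S Em ⊆ E := by
        intro q hq
        have := Finset.mem_powerset.1 hS.1
        simp only [Finset.mem_symmDiff, Em, Finset.mem_filter] at hq
        rcases hq with hq | hq
        · exact this hq.1
        · exact hq.1.1
      rw [Finset.mem_coe, Finset.mem_biUnion]
      refine ⟨(symmDiff S Em).card, ?_, Finset.mem_powersetCard.2 ⟨hsub, rfl⟩⟩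
      simp only [J, Finset.mem_filter, Finset.mem_range]
      exact ⟨Nat.lt_succ_of_le (Finset.card_le_card hsub), hS.2⟩
    · intro S _ S' _ h
      exact symmDiff_left_injective _ h
  have h5 : (J.biUnion (fun j => E.powersetCard j)).card ≤ K * (2 * K ^ 2).centralBinom := by
    refine Finset.card_biUnion_le.trans ?_
    refine (Finset.sum_le_card_nsmul _ _ ((2 * K ^ 2).centralBinom) ?_).trans ?_
    · intro j _
      rw [Finset.card_powersetCard, hE, show 4 * K ^ 2 = 2 * (2 * K ^ 2) by ring]
      exact Nat.choose_le_centralBinom _ _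
    · rw [smul_eq_mul]
      exact Nat.mul_le_mul_right _ hJ
  have := cb_bound2 K
  rw [hE]
  omega

/-- sign of a bit -/
def sg (b : Bool) : ℤ := if b then 1 else -1

def flipS {Q : Type} [DecidableEq Q] (S : Finset Q) (ε : Q → Bool) : Q → Bool :=
  fun q => if q ∈ S then !(ε q) else ε q

lemma flipS_flipS {Q : Type} [DecidableEq Q] (S : Finset Q) (ε : Q → Bool) : flipS S (flipS S ε) = ε := by
  funext q
  simp only [flipS]
  split_ifs <;> simp

def flipE {Q : Type} [DecidableEq Q] (S : Finset Q) : (Q → Bool) ≃ (Q → Bool) :=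
  ⟨flipS S, flipS S, flipS_flipS S, flipS_flipS S⟩

lemma avg_flip {Q : Type} [Fintype Q] [DecidableEq Q] (E : Finset Q) (G ψ : (Q → Bool) → ℝ) (γ : ℝ)
    (hG : ∀ ε, 0 ≤ G ε) (hinv : ∀ S ∈ E.powerset, ∀ ε, G (flipS S ε) = G ε)
    (hψ : ∀ ε, ∑ S ∈ E.powerset, ψ (flipS S ε) ≤ γ * 2 ^ E.card) :
    ∑ ε, G ε * ψ ε ≤ γ * ∑ ε, G ε := by
  have h1 : (2 : ℝ) ^ E.card * ∑ ε, G ε * ψ ε = ∑ ε, G ε * ∑ S ∈ E.powerset, ψ (flipS S ε) := by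
    have : ∀ S ∈ E.powerset, ∑ ε, G ε * ψ ε = ∑ ε, G ε * ψ (flipS S ε) := by
      intro S hS
      rw [← (flipE S).sum_comp]
      refine Finset.sum_congr rfl fun ε _ => ?_
      change G (flipS S ε) * ψ (flipS S ε) = _
      rw [hinv S hS]
    simp only [Finset.mul_sum]
    rw [Finset.sum_comm, ← Finset.sum_congr rfl this]
    rw [Finset.sum_const, Finset.card_powerset, nsmul_eq_mul, Finset.mul_sum]
    push_cast
    rfl
  have h2 : ∑ ε, G ε * ∑ S ∈ E.powerset, ψ (flipS S ε) ≤ ∑ ε, G ε * (γ * 2 ^ E.card) :=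
    Finset.sum_le_sum fun ε _ => mul_le_mul_of_nonneg_left (hψ ε) (hG ε)
  rw [← h1, ← Finset.sum_mul] at h2
  have h3 : (0 : ℝ) < 2 ^ E.card := by positivity
  refine le_of_mul_le_mul_left (h2.trans (le_of_eq ?_)) h3
  ring

lemma stage2_sum {Q : Type} [Fintype Q] [DecidableEq Q] (K : ℕ) (c : ℕ → Q → ℤ) (E : ℕ → Finset Q) (Gd : Finset ℕ) 
    (hE : ∀ k ∈ Gd, (E k).card = 4 * K ^ 2)
    (hc : ∀ k ∈ Gd, ∀ q ∈ E k, c k q = 1 ∨ c k q = -1)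
    (hc0 : ∀ k ∈ Gd, ∀ q ∈ E k, ∀ k' < k, c k' q = 0) :
    ∑ ε : Q → Bool, ∏ k ∈ Gd, (if (K : ℤ) ≤ |∑ q, c k q * sg (ε q)| then (1 / 2 : ℝ) else 1) ≤
      (3 / 4) ^ Gd.card * 2 ^ Fintype.card Q := by
  induction Gd using Finset.induction_on_max with
  | empty => simp
  | insert a s has ih =>
    have ha : a ∉ s := fun h => lt_irrefl _ (has a h)
    have ih := ih (fun k hk => hE k (by simp [hk])) (fun k hk => hc k (by simp [hk])) (fun k hk => hc0 k (by simp [hk]))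
    simp only [Finset.prod_insert ha]
    rw [Finset.card_insert_of_notMem ha, pow_succ']
    have := avg_flip (E a) (fun ε => ∏ k ∈ s, (if (K : ℤ) ≤ |∑ q, c k q * sg (ε q)| then (1 / 2 : ℝ) else 1))
      (fun ε => (if (K : ℤ) ≤ |∑ q, c a q * sg (ε q)| then (1 / 2 : ℝ) else 1)) (3/4) ?_ ?_ ?_
    · calc _ = _ := Finset.sum_congr rfl fun ε _ => mul_comm _ _
        _ ≤ _ := this
        _ ≤ _ := by rw [mul_assoc]; gcongr
    · intro ε
      refine Finset.prod_nonneg fun k _ => ?_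
      split_ifs <;> norm_num
    · intro S hS ε
      refine Finset.prod_congr rfl fun k hk => ?_
      have : ∑ q, c k q * sg (flipS S ε q) = ∑ q, c k q * sg (ε q) := by
        refine Finset.sum_congr rfl fun q _ => ?_
        by_cases hq : q ∈ S
        · rw [hc0 a (by simp) q (Finset.mem_powerset.1 hS hq) k (has k hk)]; simp
        · simp [flipS, hq]
      rw [this]
    · intro ε
      have hD : ∀ S ∈ (E a).powerset, ∑ q, c a q * sg (flipS S ε q) = 
          (∑ q, c a q * sg (ε q)) - 2 * ∑ q ∈ S, c a q * sg (ε q) := by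
        intro S _
        rw [← Finset.sum_filter_add_sum_filter_not Finset.univ (· ∈ S) (fun q => c a q * sg (ε q)),
          ← Finset.sum_filter_add_sum_filter_not Finset.univ (· ∈ S) (fun q => c a q * sg (flipS S ε q))]
        have e1 : ∑ q with q ∈ S, c a q * sg (flipS S ε q) = - ∑ q ∈ S, c a q * sg (ε q) := by
          rw [Finset.filter_univ_mem, ← Finset.sum_neg_distrib]
          refine Finset.sum_congr rfl fun q hq => ?_
          cases h : ε q <;> simp [flipS, hq, sg, h]
        have e2 : ∑ q with q ∉ S, c a q * sg (flipS S ε q) = ∑ q with q ∉ S, c a q * sg (ε q) := by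
          refine Finset.sum_congr rfl fun q hq => ?_
          rw [Finset.mem_filter] at hq
          simp [flipS, hq.2]
        rw [e1, e2, Finset.filter_univ_mem]
        ring
      have hanti := anti (E a) (fun q => c a q * sg (ε q)) (by
        intro q hq
        rcases hc a (by simp) q hq with h | h <;> cases h' : ε q <;> simp [h, sg]) 
        (∑ q, c a q * sg (ε q)) K (hE a (by simp))
      have e3 : ∑ S ∈ (E a).powerset, (if (K : ℤ) ≤ |∑ q, c a q * sg (flipS S ε q)| then (1 / 2 : ℝ) else 1)
          = ∑ S ∈ (E a).powerset, ((1 / 2 : ℝ) + 1 / 2 * 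
            (if |(∑ q, c a q * sg (ε q)) - 2 * ∑ q ∈ S, c a q * sg (ε q)| < K then 1 else 0)) := by
        refine Finset.sum_congr rfl fun S hS => ?_
        rw [hD S hS]
        split_ifs with h1 h2 h2
        · omega
        · norm_num
        · norm_num
        · omega
      rw [e3, Finset.sum_add_distrib, ← Finset.mul_sum, Finset.sum_boole, Finset.sum_const, Finset.card_powerset]
      have h6 : (2 : ℝ) * ((E a).powerset.filter (fun S => |(∑ q, c a q * sg (ε q)) - 2 * ∑ q ∈ S, c a q * sg (ε q)| < K)).card ≤ 2 ^ (E a).card := by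
        exact_mod_cast hanti
      rw [nsmul_eq_mul]
      push_cast
      linarith

lemma stage2_count {Q : Type} [Fintype Q] [DecidableEq Q] (K m0 : ℕ) (c : ℕ → Q → ℤ) (E : ℕ → Finset Q) (Gd : Finset ℕ) 
    (hE : ∀ k ∈ Gd, (E k).card = 4 * K ^ 2)
    (hc : ∀ k ∈ Gd, ∀ q ∈ E k, c k q = 1 ∨ c k q = -1)
    (hc0 : ∀ k ∈ Gd, ∀ q ∈ E k, ∀ k' < k, c k' q = 0) (hGd : 8 * m0 ≤ Gd.card) :
    (Finset.univ.filter (fun ε : Q → Bool => (Gd.filter (fun k => (K : ℤ) ≤ |∑ q, c k q * sg (ε q)|)).card < m0)).card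
      * 2 ^ (2 * m0) ≤ 2 ^ Fintype.card Q := by
  have h1 := stage2_sum K c E Gd hE hc hc0
  have h2 : ((Finset.univ.filter (fun ε : Q → Bool => (Gd.filter (fun k => (K : ℤ) ≤ |∑ q, c k q * sg (ε q)|)).card < m0)).card : ℝ) * (1/2) ^ m0 ≤ 
     ∑ ε : Q → Bool, ∏ k ∈ Gd, (if (K : ℤ) ≤ |∑ q, c k q * sg (ε q)| then (1 / 2 : ℝ) else 1) := by
    have hprod : ∀ ε : Q → Bool, ∏ k ∈ Gd, (if (K : ℤ) ≤ |∑ q, c k q * sg (ε q)| then (1 / 2 : ℝ) else 1) = 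
       (1/2) ^ (Gd.filter (fun k => (K : ℤ) ≤ |∑ q, c k q * sg (ε q)|)).card := by
      intro ε
      rw [← Finset.prod_filter, Finset.prod_const]
    rw [← nsmul_eq_mul, ← Finset.sum_const]
    refine (Finset.sum_le_sum ?_).trans (Finset.sum_le_univ_sum_of_nonneg ?_)
    · intro ε hε
      rw [hprod]
      exact pow_le_pow_of_le_one (by norm_num) (by norm_num) (Finset.mem_filter.1 hε).2.le
    · intro ε
      rw [hprod]; positivity
  have h3 : ((3 / 4 : ℝ)) ^ Gd.card ≤ (1 / 8) ^ m0 := by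
    calc ((3 / 4 : ℝ)) ^ Gd.card ≤ (3 / 4) ^ (8 * m0) := pow_le_pow_of_le_one (by norm_num) (by norm_num) hGd
      _ = ((3 / 4) ^ 8) ^ m0 := pow_mul _ _ _
      _ ≤ _ := by gcongr; norm_num
  have h4 := h2.trans (h1.trans (mul_le_mul_of_nonneg_right h3 (by positivity)))
  have h5 : ((Finset.univ.filter (fun ε : Q → Bool => (Gd.filter (fun k => (K : ℤ) ≤ |∑ q, c k q * sg (ε q)|)).card < m0)).card : ℝ) * 2 ^ (2 * m0) ≤ 2 ^ Fintype.card Q := by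
    have h6 : (1 / 2 : ℝ) ^ m0 * 8 ^ m0 = 2 ^ (2 * m0) := by
      rw [← mul_pow, pow_mul]; norm_num
    have h7 : (1 / 8 : ℝ) ^ m0 * 8 ^ m0 = 1 := by
      rw [← mul_pow]; norm_num
    have := mul_le_mul_of_nonneg_right h4 (show (0 : ℝ) ≤ 8 ^ m0 by positivity)
    rw [mul_assoc, h6] at this
    calc _ ≤ _ := this
      _ = ((1 / 8 : ℝ) ^ m0 * 8 ^ m0) * 2 ^ Fintype.card Q := by ring
      _ = _ := by rw [h7, one_mul]
  exact_mod_cast h5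

lemma union_bound {Ω : Type} [Fintype Ω] [Nonempty Ω] (s a : ℕ) (hs : s < 2 ^ a) (bad : Fin s → Ω → Prop)
    [∀ j, DecidablePred (bad j)]
    (h : ∀ j, (Finset.univ.filter (bad j)).card * 2 ^ a ≤ Fintype.card Ω) : ∃ ω, ∀ j, ¬ bad j ω := by
  classical
  by_contra hcon
  push Not at hcon
  have h1 : (Finset.univ : Finset Ω) ⊆ Finset.univ.biUnion (fun j => Finset.univ.filter (bad j)) := by
    intro ω _
    obtain ⟨j, hj⟩ := hcon ω
    rw [Finset.mem_biUnion]
    exact ⟨j, Finset.mem_univ _, by simp [hj]⟩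
  have h2 := (Finset.card_le_card h1).trans Finset.card_biUnion_le
  have h3 : (∑ j : Fin s, (Finset.univ.filter (bad j)).card) * 2 ^ a ≤ s * Fintype.card Ω := by
    rw [Finset.sum_mul]
    refine (Finset.sum_le_sum fun j _ => h j).trans ?_
    simp
  have h4 : Fintype.card Ω * 2 ^ a ≤ s * Fintype.card Ω := (Nat.mul_le_mul_right _ h2).trans h3
  have h5 : 0 < Fintype.card Ω := Fintype.card_pos
  nlinarith

lemma stage1_gen {t N : ℕ} (bad : Fin t → Fin N → Prop) [∀ i, DecidablePred (bad i)]
    (hb : ∀ i, 15 * (Finset.univ.filter (bad i)).card ≤ N) :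
    (Finset.univ.filter (fun r : Fin t → Fin N =>
      t < 2 * (Finset.univ.filter (fun i => bad i (r i))).card)).card * 2 ^ t ≤ N ^ t := by
  have h1 : (Finset.univ.filter (fun r : Fin t → Fin N =>
      t < 2 * (Finset.univ.filter (fun i => bad i (r i))).card)).card * 4 ^ t ≤
      ∑ r : Fin t → Fin N, ∏ i, (if bad i (r i) then 16 else 1) := by
    rw [← smul_eq_mul, ← Finset.sum_const]
    refine (Finset.sum_le_sum ?_).trans (Finset.sum_le_sum_of_subset (Finset.subset_univ _))
    intro r hr
    have hr := (Finset.mem_filter.1 hr).2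
    rw [← Finset.prod_filter, Finset.prod_const, show (16 : ℕ) = 4 ^ 2 by norm_num, ← pow_mul]
    exact Nat.pow_le_pow_right (by norm_num) hr.le
  have h2 : ∑ r : Fin t → Fin N, ∏ i, (if bad i (r i) then 16 else 1) = 
      ∏ i : Fin t, ∑ ρ : Fin N, (if bad i ρ then 16 else 1) := by
    rw [Finset.prod_univ_sum, Fintype.piFinset_univ]
  have h3 : ∏ i : Fin t, ∑ ρ : Fin N, (if bad i ρ then 16 else 1) ≤ (2 * N) ^ t := by
    refine (Finset.prod_le_pow_card _ _ (2 * N) ?_).trans (by simp)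
    intro i _
    have : ∀ ρ, (if bad i ρ then 16 else 1) = 1 + 15 * (if bad i ρ then 1 else 0) := by
      intro ρ; split_ifs <;> rfl
    simp only [this]
    rw [Finset.sum_add_distrib, ← Finset.mul_sum]
    have := hb i
    rw [Finset.card_filter] at this
    simp only [Finset.sum_const, Finset.card_univ, Fintype.card_fin, smul_eq_mul, mul_one]
    omega
  rw [h2] at h1
  have h4 := h1.trans h3
  rw [show (4 : ℕ) = 2 * 2 by norm_num, mul_pow, mul_pow, ← mul_assoc, mul_comm (2 ^ t) (N ^ t)] at h4
  exact Nat.le_of_mul_le_mul_right h4 (by positivity)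

lemma choose_r (t N T M s : ℕ) [NeZero N] (hN : N = 32 * M) (hs : s < 2 ^ t)
    (seg : Fin s → (Fin t × Fin N) ⊕ (Fin t × Fin N) → Fin T)
    (hseg : ∀ j k, Fintype.card {v // seg j v = k} ≤ M) :
    ∃ r : Fin t → Fin N, ∀ j, t * N ≤ 4 * (Finset.univ.filter (fun p : Fin t × Fin N =>
      seg j (Sum.inl p) ≠ seg j (Sum.inr (p.1, p.2 + r p.1)))).card := by
  classical
  let X : Fin s → Fin t → Fin N → ℕ := fun j i ρ => (Finset.univ.filter (fun x : Fin N =>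
      seg j (Sum.inl (i, x)) = seg j (Sum.inr (i, x + ρ)))).card
  have hX : ∀ j i, ∑ ρ, X j i ρ ≤ N * M := by
    intro j i
    simp only [X, Finset.card_filter]
    rw [Finset.sum_comm]
    refine (Finset.sum_le_card_nsmul _ _ M ?_).trans (by simp)
    intro x _
    rw [← Finset.card_filter]
    refine le_trans ?_ (hseg j (seg j (Sum.inl (i, x))))
    rw [Fintype.card_subtype]
    refine Finset.card_le_card_of_injOn (fun ρ => Sum.inr (i, x + ρ)) ?_ ?_
    · intro ρ hρ
      simp only [Finset.coe_filter, Finset.mem_univ, true_and, Set.mem_ofPred_eq] at hρ ⊢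
      exact hρ.symm
    · intro ρ _ ρ' _ h
      simpa using h
  let bad : Fin s → Fin t → Fin N → Prop := fun j i ρ => N ≤ 2 * X j i ρ
  have hb : ∀ j i, 15 * (Finset.univ.filter (bad j i)).card ≤ N := by
    intro j i
    have h1 : (Finset.univ.filter (bad j i)).card * N ≤ ∑ ρ, 2 * X j i ρ := by
      rw [← smul_eq_mul, ← Finset.sum_const]
      refine (Finset.sum_le_sum ?_).trans (Finset.sum_le_sum_of_subset (Finset.subset_univ _))
      intro ρ hρ
      exact (Finset.mem_filter.1 hρ).2
    rw [← Finset.mul_sum] at h1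
    have h2 := hX j i
    have h3 : (Finset.univ.filter (bad j i)).card * N ≤ (2 * M) * N := by nlinarith
    have h4 := Nat.le_of_mul_le_mul_right h3 (Nat.pos_of_ne_zero (NeZero.ne N))
    omega
  obtain ⟨r, hr⟩ := union_bound s t hs (fun j (r : Fin t → Fin N) => 
      t < 2 * (Finset.univ.filter (fun i => bad j i (r i))).card) (by
      intro j
      have := stage1_gen (bad j) (hb j)
      simpa using this)
  refine ⟨r, fun j => ?_⟩
  have hr := hr j
  have e1 : (Finset.univ.filter (fun p : Fin t × Fin N =>
      seg j (Sum.inl p) ≠ seg j (Sum.inr (p.1, p.2 + r p.1)))).card = ∑ i, (N - X j i (r i)) := by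
    rw [Finset.card_filter, Fintype.sum_prod_type]
    refine Finset.sum_congr rfl fun i _ => ?_
    rw [← Finset.card_filter]
    have := Finset.card_filter_add_card_filter_not (s := (Finset.univ : Finset (Fin N))) (fun x => seg j (Sum.inl (i, x)) = seg j (Sum.inr (i, x + r i)))
    simp only [Finset.card_univ, Fintype.card_fin] at this
    simp only [X]
    simp only [ne_eq]
    omega
  rw [e1]
  have h5 : (Finset.univ.filter (fun i => ¬ bad j i (r i))).card * N ≤ ∑ i, 2 * (N - X j i (r i)) := by
    rw [← smul_eq_mul, ← Finset.sum_const]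
    refine (Finset.sum_le_sum ?_).trans (Finset.sum_le_sum_of_subset (Finset.subset_univ _))
    intro i hi
    have := (Finset.mem_filter.1 hi).2
    simp only [bad] at this
    omega
  rw [← Finset.mul_sum] at h5
  have h6 := Finset.card_filter_add_card_filter_not (s := (Finset.univ : Finset (Fin t))) (fun i => bad j i (r i))
  simp only [Finset.card_univ, Fintype.card_fin] at h6
  have h7 : t ≤ 2 * (Finset.univ.filter (fun i => ¬ bad j i (r i))).card := by omega
  nlinarith

/-- coefficient of the sign of the pair `q` in the imbalance of segment `k` -/
def cc {Q : Type} {T : ℕ} (seg : Q ⊕ Q → Fin T) (mate : Q ≃ Q) (k : ℕ) (q : Q) : ℤ :=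
  (if (seg (Sum.inl q) : ℕ) = k then 1 else 0) - (if (seg (Sum.inr (mate q)) : ℕ) = k then 1 else 0)

lemma mn_total {Q : Type} [Fintype Q] {T : ℕ} (seg : Q ⊕ Q → Fin T) (mate : Q ≃ Q) (ε : Q → Bool) :
    2 * ∑ k ∈ Finset.range T, (mn seg {v | Sum.elim (fun p => ε p = true) (fun p => ε (mate.symm p) = false) v} k : ℤ)
      + ∑ k ∈ Finset.range T, |∑ q, cc seg mate k q * sg (ε q)| = 2 * Fintype.card Q := by
  classical
  set Y : Set (Q ⊕ Q) := {v | Sum.elim (fun p => ε p = true) (fun p => ε (mate.symm p) = false) v} with hY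
  have h1 : ∀ k, 2 * (mn seg Y k : ℤ) + |∑ q, cc seg mate k q * sg (ε q)| = 
      ((Finset.univ.filter (fun v => (seg v : ℕ) = k)).card : ℤ) := by
    intro k
    have h2 : ∑ q, cc seg mate k q * sg (ε q) = 
       (((Finset.univ.filter (fun v => (seg v : ℕ) = k)).filter (· ∈ Y)).card : ℤ) - 
        (((Finset.univ.filter (fun v => (seg v : ℕ) = k)).filter (· ∉ Y)).card : ℤ) := by
      simp only [Finset.filter_filter, Finset.card_filter]
      push_cast
      rw [← Finset.sum_sub_distrib, Fintype.sum_sum_type]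
      rw [← mate.sum_comp (fun q => (if (seg (Sum.inr q) : ℕ) = k ∧ Sum.inr q ∈ Y then (1 : ℤ) else 0) - 
         (if (seg (Sum.inr q) : ℕ) = k ∧ Sum.inr q ∉ Y then (1 : ℤ) else 0)), ← Finset.sum_add_distrib]
      refine Finset.sum_congr rfl fun q _ => ?_
      have i1 : (Sum.inl q ∈ Y) ↔ ε q = true := by rw [hY]; rfl
      have i2 : (Sum.inr (mate q) ∈ Y) ↔ ε q = false := by
        rw [hY]; change ε (mate.symm (mate q)) = false ↔ _
        rw [Equiv.symm_apply_apply]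
      simp only [i1, i2]
      unfold cc sg
      cases ε q <;> by_cases a1 : (seg (Sum.inl q) : ℕ) = k <;> by_cases a2 : (seg (Sum.inr (mate q)) : ℕ) = k <;> simp [a1, a2]
    rw [h2]
    have h3 := Finset.card_filter_add_card_filter_not (s := Finset.univ.filter (fun v => (seg v : ℕ) = k)) (· ∈ Y)
    have h4 : mn seg Y k = min ((Finset.univ.filter (fun v => (seg v : ℕ) = k)).filter (· ∈ Y)).card
      ((Finset.univ.filter (fun v => (seg v : ℕ) = k)).filter (· ∉ Y)).card := by
      unfold mn; congr!
    rw [h4, ← h3]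
    generalize ((Finset.univ.filter (fun v => (seg v : ℕ) = k)).filter (· ∈ Y)).card = a
    generalize ((Finset.univ.filter (fun v => (seg v : ℕ) = k)).filter (· ∉ Y)).card = b
    rcases le_total a b with h | h
    · rw [min_eq_left h, abs_of_nonpos (by omega)]; push_cast; ring
    · rw [min_eq_right h, abs_of_nonneg (by omega)]; push_cast; ring
  rw [Finset.mul_sum, ← Finset.sum_add_distrib, Finset.sum_congr rfl fun k _ => h1 k]
  have h5 := Finset.card_eq_sum_card_fiberwise (f := fun v => (seg v : ℕ)) (s := (Finset.univ : Finset (Q ⊕ Q))) (t := Finset.range T)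
    (by intro v _; simp)
  rw [Finset.card_univ, Fintype.card_sum] at h5
  rw [two_mul]
  exact_mod_cast h5.symm

lemma choose_eps {Q : Type} [Fintype Q] [DecidableEq Q] (K s : ℕ) (hK : 0 < K) 
    (hs : s < 2 ^ (2 * K)) (mate : Q ≃ Q) (seg : Fin s → Q ⊕ Q → Fin (128 * K))
    (hseg : ∀ j k, Fintype.card {v // seg j v = k} ≤ 64 * K ^ 2)
    (hC : ∀ j, 4096 * K ^ 3 ≤ 4 * (Finset.univ.filter (fun p : Q =>
      seg j (Sum.inl p) ≠ seg j (Sum.inr (mate p)))).card) :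
    ∃ ε : Q → Bool, ∀ j, (K * K : ℤ) ≤ ∑ k ∈ Finset.range (128 * K), |∑ q, cc (seg j) mate k q * sg (ε q)| := by
  classical
  let F : Fin s → ℕ → Finset Q := fun j k => Finset.univ.filter (fun p : Q =>
      seg j (Sum.inl p) ≠ seg j (Sum.inr (mate p)) ∧ min (seg j (Sum.inl p) : ℕ) (seg j (Sum.inr (mate p)) : ℕ) = k)
  have hF : ∀ j k, k < 128 * K → (F j k).card ≤ 64 * K ^ 2 := by
    intro j k hk
    refine le_trans ?_ (hseg j ⟨k, hk⟩)
    rw [Fintype.card_subtype]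
    refine Finset.card_le_card_of_injOn (fun p => if (seg j (Sum.inl p) : ℕ) = k then Sum.inl p else Sum.inr (mate p)) ?_ ?_
    · intro p hp
      have hp := (Finset.mem_filter.1 (Finset.mem_coe.1 hp)).2.2
      rw [Finset.mem_coe, Finset.mem_filter]
      refine ⟨Finset.mem_univ _, Fin.ext ?_⟩
      dsimp only
      split_ifs with h
      · exact h
      · rcases min_choice (seg j (Sum.inl p) : ℕ) (seg j (Sum.inr (mate p)) : ℕ) with h' | h'
        · omega
        · omega
    · intro p _ p' _ h
      dsimp only at h
      split_ifs at h with h1 h2 h2 <;> simpa using h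
  let Gd : Fin s → Finset ℕ := fun j => (Finset.range (128 * K)).filter (fun k => 4 * K ^ 2 ≤ (F j k).card)
  have hGd : ∀ j, 8 * K ≤ (Gd j).card := by
    intro j
    have h1 : (Finset.univ.filter (fun p : Q => seg j (Sum.inl p) ≠ seg j (Sum.inr (mate p)))).card = 
        ∑ k ∈ Finset.range (128 * K), (F j k).card := by
      rw [Finset.card_eq_sum_card_fiberwise (f := fun p => min (seg j (Sum.inl p) : ℕ) (seg j (Sum.inr (mate p)) : ℕ)) (t := Finset.range (128 * K))]
      · refine Finset.sum_congr rfl fun k _ => ?_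
        rw [Finset.filter_filter]
      · intro p _
        simp
    have h2 : ∑ k ∈ Finset.range (128 * K), (F j k).card ≤ (Gd j).card * (64 * K ^ 2) + 128 * K * (4 * K ^ 2) := by
      rw [← Finset.sum_filter_add_sum_filter_not (Finset.range (128 * K)) (fun k => 4 * K ^ 2 ≤ (F j k).card)]
      refine Nat.add_le_add ?_ ?_
      · rw [← smul_eq_mul]
        refine Finset.sum_le_card_nsmul _ _ _ fun k hk => hF j k ?_
        simpa using (Finset.mem_filter.1 hk).1
      · refine (Finset.sum_le_card_nsmul _ _ (4 * K ^ 2) fun k hk => ?_).trans ?_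
        · exact (not_le.1 (Finset.mem_filter.1 hk).2).le
        · rw [smul_eq_mul]
          refine Nat.mul_le_mul_right _ ?_
          exact (Finset.card_filter_le _ _).trans (by simp)
    have h3 := hC j
    rw [h1] at h3
    have h4 : (8 * K) * (256 * K ^ 2) ≤ (Gd j).card * (256 * K ^ 2) := by nlinarith
    exact Nat.le_of_mul_le_mul_right h4 (by positivity)
  have hE : ∀ j k, ∃ E : Finset Q, k ∈ Gd j → E ⊆ F j k ∧ E.card = 4 * K ^ 2 := by
    intro j k
    by_cases hk : k ∈ Gd j
    · obtain ⟨E, h1, h2⟩ := Finset.exists_subset_card_eq (Finset.mem_filter.1 hk).2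
      exact ⟨E, fun _ => ⟨h1, h2⟩⟩
    · exact ⟨∅, fun h => absurd h hk⟩
  choose E hE using hE
  obtain ⟨ε, hε⟩ := union_bound s (2 * K) hs (fun j (ε : Q → Bool) => 
      ((Gd j).filter (fun k => (K : ℤ) ≤ |∑ q, cc (seg j) mate k q * sg (ε q)|)).card < K) (by
      intro j
      have := stage2_count K K (cc (seg j) mate) (E j) (Gd j) (fun k hk => (hE j k hk).2) ?_ ?_ (hGd j)
      · simpa using this
      · intro k hk q hq
        have := (Finset.mem_filter.1 ((hE j k hk).1 hq)).2
        obtain ⟨h1, h2⟩ := this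
        have h1 : (seg j (Sum.inl q) : ℕ) ≠ (seg j (Sum.inr (mate q)) : ℕ) := fun h => h1 (Fin.ext h)
        unfold cc
        split_ifs <;> omega
      · intro k hk q hq k' hk'
        have := (Finset.mem_filter.1 ((hE j k hk).1 hq)).2
        obtain ⟨h1, h2⟩ := this
        unfold cc
        split_ifs <;> omega)
  refine ⟨ε, fun j => ?_⟩
  have h1 := not_lt.1 (hε j)
  calc (K * K : ℤ) ≤ ∑ k ∈ (Gd j).filter (fun k => (K : ℤ) ≤ |∑ q, cc (seg j) mate k q * sg (ε q)|), (K : ℤ) := by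
        rw [Finset.sum_const, nsmul_eq_mul]
        have : (K : ℤ) ≤ (((Gd j).filter (fun k => (K : ℤ) ≤ |∑ q, cc (seg j) mate k q * sg (ε q)|)).card : ℤ) := by
          exact_mod_cast h1
        nlinarith
    _ ≤ ∑ k ∈ (Gd j).filter (fun k => (K : ℤ) ≤ |∑ q, cc (seg j) mate k q * sg (ε q)|), |∑ q, cc (seg j) mate k q * sg (ε q)| :=
        Finset.sum_le_sum fun k hk => (Finset.mem_filter.1 hk).2
    _ ≤ _ := by
        refine Finset.sum_le_sum_of_subset_of_nonneg ?_ fun _ _ _ => abs_nonneg _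
        exact (Finset.filter_subset _ _).trans (Finset.filter_subset _ _)

lemma core {n : ℕ} (K : ℕ) (hK : 0 < K) [NeZero (2 * K)] [NeZero (2048 * K ^ 2)]
    (e : Fin 3 × Fin (2 * K) × Fin (2048 * K ^ 2) ≃ Fin n)
    (w W : ℕ) (hw : w ≤ 2 ^ W) (hKW : 4 + 256 * W < K) (s : ℕ) (f : Fin s → MvPolynomial (Fin n) (ZMod 2))
    (hf : ∀ j, ∃ P : ABP (ZMod 2) n, P.IsROABP ∧ P.eval = f j ∧ P.size ≤ w)
    (hsum : (hardABP (2 * K) (2048 * K ^ 2) e).eval = ∑ j, f j) : 2 ^ (2 * K) ≤ s := by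
  classical
  by_contra hs
  have hs := not_le.1 hs
  choose P hP1 hP2 hP3 using hf
  let Q := Fin (2 * K) × Fin (2048 * K ^ 2)
  have hQ : Fintype.card Q = 4096 * K ^ 3 := by
    simp only [Q, Fintype.card_prod, Fintype.card_fin]; ring
  let em : Q ⊕ Q → Fin n := Sum.elim (fun p => e (1, p)) (fun p => e (2, p))
  have hem : Function.Injective em := by
    intro a b h
    rcases a with a | a <;> rcases b with b | b <;> simp [em] at h <;> simp [h]
  have hV : Fintype.card (Q ⊕ Q) = (128 * K) * (64 * K ^ 2) := by
    rw [Fintype.card_sum, hQ]; ring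
  have hr := fun j => roabp_rank em hem (P j) (hP1 j) w (hP3 j) (128 * K) (64 * K ^ 2) (by positivity) (by positivity) hV
  choose seg hseg hrank using hr
  obtain ⟨r, hr⟩ := choose_r (2 * K) (2048 * K ^ 2) (128 * K) (64 * K ^ 2) s (by ring) hs seg hseg
  let mate : Q ≃ Q := Equiv.prodShear (Equiv.refl _) (fun i => Equiv.addRight (r i))
  have hmate : ∀ p : Q, mate p = (p.1, p.2 + r p.1) := fun p => rfl
  obtain ⟨ε, hε⟩ := choose_eps K s hK hs mate seg hseg (by
    intro j
    have := hr j
    calc _ = 2 * K * (2048 * K ^ 2) := by ring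
      _ ≤ _ := this)
  let pt : (Q ⊕ Q → ZMod 2) → Fin n → ZMod 2 := fun z i =>
    if (e.symm i).1 = 0 then (if (e.symm i).2.2 = r (e.symm i).2.1 then 1 else 0)
    else if (e.symm i).1 = 1 then z (Sum.inl (e.symm i).2) else z (Sum.inr (e.symm i).2)
  have hpt1 : ∀ z v, pt z (em v) = z v := by
    intro z v
    rcases v with v | v
    · simp [pt, em]
    · simp [pt, em]
  have hpt2 : ∀ z z' i, i ∉ Set.range em → pt z i = pt z' i := by
    intro z z' i hi
    have h0 : (e.symm i).1 = 0 := by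
      by_contra h0
      apply hi
      have h12 : (e.symm i).1 = 1 ∨ (e.symm i).1 = 2 := by
        generalize (e.symm i).1 = a at *
        revert a; decide
      rcases h12 with h | h
      · refine ⟨Sum.inl (e.symm i).2, ?_⟩
        change e (1, (e.symm i).2) = i
        rw [← h]; simp
      · refine ⟨Sum.inr (e.symm i).2, ?_⟩
        change e (2, (e.symm i).2) = i
        rw [← h]; simp
    simp only [pt, h0, if_true]
  have hpt3 : ∀ z, MvPolynomial.eval (pt z) (hardABP (2 * K) (2048 * K ^ 2) e).eval = 
      ∏ p : Q, (z (Sum.inl p) + z (Sum.inr (mate p))) := by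
    intro z
    rw [hardABP_eval e (pt z) r (by intro i ρ; simp [pt])]
    refine Finset.prod_congr rfl fun p _ => ?_
    have h1 := hpt1 z (Sum.inl p)
    have h2 := hpt1 z (Sum.inr (mate p))
    rw [← h1, ← h2]
    rfl
  set Y : Set (Q ⊕ Q) := {v | Sum.elim (fun p => ε p = true) (fun p => ε (mate.symm p) = false) v} with hY
  have hB : ∀ j, 2 * ∑ k ∈ Finset.range (128 * K), mn (seg j) Y k + K * K ≤ 2 * (4096 * K ^ 3) := by
    intro j
    have h1 := mn_total (seg j) mate ε
    have h2 := hε j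
    rw [hQ] at h1
    zify
    rw [← hY] at h1
    push_cast at h1
    linarith
  set B := (2 * (4096 * K ^ 3) - K * K) / 2 with hBdef
  have hR : RankLE Y (fun z => ∏ p : Q, (z (Sum.inl p) + z (Sum.inr (mate p)))) (s * (w ^ (128 * K) * 2 ^ B)) := by
    have h1 : (fun z : Q ⊕ Q → ZMod 2 => ∏ p : Q, (z (Sum.inl p) + z (Sum.inr (mate p)))) = 
       fun z => ∑ j : Fin s, MvPolynomial.eval (pt z) (P j).eval := by
      funext z
      rw [← hpt3, hsum, map_sum]
      exact Finset.sum_congr rfl fun j _ => by rw [hP2]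
    rw [h1]
    have h2 := RankLE.sum (Y := Y) (Finset.univ : Finset (Fin s)) (f := fun j z => MvPolynomial.eval (pt z) (P j).eval)
      (R := w ^ (128 * K) * 2 ^ B) (fun j _ => (hrank j pt hpt1 hpt2 Y).mono (by
        refine Nat.mul_le_mul_left _ (Nat.pow_le_pow_right (by norm_num) ?_)
        have := hB j
        omega))
    simpa using h2
  have h5 := full_rank mate ε _ hR
  rw [hQ] at h5
  have hs0 : K * K ≤ 2 * (4096 * K ^ 3) := by nlinarith [Nat.pos_of_ne_zero hK.ne', Nat.zero_le (K ^ 2), Nat.pow_le_pow_right hK (show 2 ≤ 3 by norm_num)]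
  have h6 : 2 ^ (4096 * K ^ 3) ≤ 2 ^ (2 * K + (W * (128 * K) + B)) := by
    refine h5.trans ?_
    rw [pow_add, pow_add, pow_mul 2 W]
    gcongr
  have h7 := (Nat.pow_le_pow_iff_right (by norm_num)).1 h6
  have h8 : 2 * B + K * K ≤ 2 * (4096 * K ^ 3) := by omega
  nlinarith

lemma poly_le_two_pow (q : Polynomial ℕ) : ∃ L0, ∀ L, L0 ≤ L → q.eval L ≤ 2 ^ L := by
  have h : Filter.Tendsto (fun L : ℕ => ((q.eval L : ℕ) : ℝ) / 2 ^ L) Filter.atTop (nhds 0) := by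
    induction q using Polynomial.induction_on' with
    | add p q hp hq =>
      have := hp.add hq
      rw [add_zero] at this
      refine this.congr fun L => ?_
      rw [Polynomial.eval_add]; push_cast; ring
    | monomial d a =>
      have := (tendsto_pow_const_div_const_pow_of_one_lt d (show (1 : ℝ) < 2 by norm_num)).const_mul (a : ℝ)
      rw [mul_zero] at this
      refine this.congr fun L => ?_
      rw [Polynomial.eval_monomial]; push_cast; ring
  have h2 := h.eventually (gt_mem_nhds (show (0 : ℝ) < 1 by norm_num))
  obtain ⟨L0, hL⟩ := Filter.eventually_atTop.1 h2
  refine ⟨L0, fun L hl => ?_⟩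
  have := hL L hl
  rw [div_lt_one (by positivity)] at this
  exact_mod_cast this.le

lemma poly_eval_mono (q : Polynomial ℕ) {a b : ℕ} (h : a ≤ b) : q.eval a ≤ q.eval b := by
  rw [Polynomial.eval_eq_sum, Polynomial.eval_eq_sum]
  exact Finset.sum_le_sum fun i _ => Nat.mul_le_mul_left _ (Nat.pow_le_pow_left h i)

lemma poly_asymp (q : Polynomial ℕ) : ∃ K0, ∀ K, K0 ≤ K → q.eval (12288 * K ^ 3) ≤ 2 ^ (K / 512) := by
  obtain ⟨L0, h⟩ := poly_le_two_pow (q.comp (Polynomial.C 12288 * (512 * (Polynomial.X + 1)) ^ 3))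
  refine ⟨512 * L0, fun K hK => ?_⟩
  refine le_trans ?_ (h (K / 512) (by omega))
  rw [Polynomial.eval_comp]
  refine poly_eval_mono q ?_
  simp only [Polynomial.eval_mul, Polynomial.eval_pow, Polynomial.eval_add, Polynomial.eval_X, Polynomial.eval_one, Polynomial.eval_C, Polynomial.eval_ofNat]
  have : K ≤ 512 * (K / 512 + 1) := by omega
  exact Nat.mul_le_mul_left _ (Nat.pow_le_pow_left this 3)

/-- a sub-exponential separation between sums of ROABPs and syntactically
multilinear ABPs: there are a constant `c > 0`, a polynomial bound `p` and a field `G` such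
that for infinitely many `n` (the set `S`) there is a multilinear polynomial `h n` in `n`
variables computable by an smABP of size at most `p(n)`, and for every polynomial bound `q`,
for all sufficiently large `n ∈ S`, whenever `h n = f_1 + ⋯ + f_s` with each `f_j` computable
by a ROABP of size at most `q(n)`, we must have `s ≥ 2^{c · n^{1/500}}`. -/
theorem sum_of_ROABPs_lower_bound :
    ∃ c : ℝ, 0 < c ∧ ∃ (p : Polynomial ℕ) (G : Type) (_ : Field G)
      (S : Set ℕ) (h : (n : ℕ) → MvPolynomial (Fin n) G),
      S.Infinite ∧
      (∀ n ∈ S, (∀ i, (h n).degreeOf i ≤ 1) ∧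
        ∃ P : ABP G n, P.SynMultilinear ∧ P.eval = h n ∧ P.size ≤ p.eval n) ∧
      (∀ q : Polynomial ℕ, ∃ N : ℕ, ∀ n ∈ S, N ≤ n →
        ∀ (s : ℕ) (f : Fin s → MvPolynomial (Fin n) G),
          (∀ j, ∃ P : ABP G n, P.IsROABP ∧ P.eval = f j ∧ P.size ≤ q.eval n) →
          h n = ∑ j, f j →
          (2 : ℝ) ^ (c * (n : ℝ) ^ ((1 : ℝ) / 500)) ≤ (s : ℝ)) := by
  classical
  have hex : ∀ n : ℕ, ∃ hn : MvPolynomial (Fin n) (ZMod 2), (∃ K, 0 < K ∧ n = 12288 * K ^ 3) →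
      ∃ (K : ℕ) (_ : 0 < K) (_ : n = 12288 * K ^ 3) (_ : NeZero (2 * K)) (_ : NeZero (2048 * K ^ 2))
        (e : Fin 3 × Fin (2 * K) × Fin (2048 * K ^ 2) ≃ Fin n),
        hn = (hardABP (2 * K) (2048 * K ^ 2) e).eval := by
    intro n
    by_cases h : ∃ K, 0 < K ∧ n = 12288 * K ^ 3
    · obtain ⟨K, hK, hn⟩ := h
      have h1 : NeZero (2 * K) := ⟨by positivity⟩
      have h2 : NeZero (2048 * K ^ 2) := ⟨by positivity⟩
      let e : Fin 3 × Fin (2 * K) × Fin (2048 * K ^ 2) ≃ Fin n := Fintype.equivOfCardEq (by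
        simp only [Fintype.card_prod, Fintype.card_fin]
        rw [hn]; ring)
      exact ⟨_, fun _ => ⟨K, hK, hn, h1, h2, e, rfl⟩⟩
    · exact ⟨0, fun h' => absurd h' h⟩
  choose h hh using hex
  refine ⟨1 / 100, by norm_num, (2 * Polynomial.X + 2) * (Polynomial.X + 1), ZMod 2, inferInstance,
    {n | ∃ K, 0 < K ∧ n = 12288 * K ^ 3}, h, ?_, ?_, ?_⟩
  · refine Set.infinite_of_not_bddAbove ?_
    rintro ⟨b, hb⟩
    have h1 := hb (show 12288 * (b + 1) ^ 3 ∈ {n | ∃ K, 0 < K ∧ n = 12288 * K ^ 3} from ⟨b + 1, by omega, rfl⟩)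
    have h2 : b + 1 ≤ (b + 1) ^ 3 := Nat.le_self_pow (by norm_num) _
    omega
  · intro n hn
    obtain ⟨K, hK, hnK, i1, i2, e, he⟩ := hh n hn
    have hsm := hardABP_synMultilinear e e.injective
    refine ⟨fun i => ?_, _, hsm, he.symm, ?_⟩
    · rw [he]; exact degreeOf_le_one _ hsm i
    · refine (hardABP_size e).trans ?_
      simp only [Polynomial.eval_mul, Polynomial.eval_add, Polynomial.eval_X, Polynomial.eval_one, Polynomial.eval_ofNat]
      have a1 : K ≤ K ^ 3 := Nat.le_self_pow (by norm_num) _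
      have a2 : K ^ 2 ≤ K ^ 3 := Nat.pow_le_pow_right hK (by norm_num)
      have a3 : 2 * K * (2048 * K ^ 2 + 1) = 4096 * K ^ 3 + 2 * K := by ring
      rw [a3]
      refine Nat.mul_le_mul ?_ ?_ <;> omega
  · intro q
    obtain ⟨K0, hK0⟩ := poly_asymp q
    refine ⟨12288 * (K0 + 9) ^ 3, fun n hn hNn s f hf hsum => ?_⟩
    obtain ⟨K, hK, hnK, i1, i2, e, he⟩ := hh n hn
    have hKbig : K0 + 9 ≤ K := by
      rw [hnK] at hNn
      exact (Nat.pow_le_pow_iff_left (by norm_num)).1 (Nat.le_of_mul_le_mul_left hNn (by norm_num))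
    have hw := hK0 K (by omega)
    rw [← hnK] at hw
    have hmain := core K hK e (q.eval n) (K / 512) hw (by omega) s f hf (he ▸ hsum)
    have h1 : (n : ℝ) ^ ((1 : ℝ) / 500) ≤ 24 * K := by
      have hn1 : (1 : ℝ) ≤ n := by
        have : 1 ≤ n := by rw [hnK]; exact Nat.succ_le_of_lt (by positivity)
        exact_mod_cast this
      calc (n : ℝ) ^ ((1 : ℝ) / 500) ≤ (n : ℝ) ^ ((1 : ℝ) / 3) := 
            Real.rpow_le_rpow_of_exponent_le hn1 (by norm_num)
        _ ≤ ((24 * K : ℝ) ^ (3 : ℕ)) ^ ((1 : ℝ) / 3) := by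
            refine Real.rpow_le_rpow (by positivity) ?_ (by norm_num)
            rw [hnK]; push_cast
            have : (0 : ℝ) ≤ (K : ℝ) ^ 3 := by positivity
            nlinarith
        _ = 24 * K := by
            rw [← Real.rpow_natCast, ← Real.rpow_mul (by positivity)]
            norm_num
    have h2 : (2 : ℝ) ^ ((1 / 100 : ℝ) * (n : ℝ) ^ ((1 : ℝ) / 500)) ≤ (2 : ℝ) ^ (((2 * K : ℕ) : ℝ)) := by
      refine Real.rpow_le_rpow_of_exponent_le (by norm_num) ?_
      push_cast
      have : (0 : ℝ) ≤ K := by positivity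
      linarith
    refine h2.trans ?_
    rw [Real.rpow_natCast]
    exact_mod_cast hmain
end
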